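/- Let A_1, A_2 > 1 and c_1, c_2 > 0 be real numbers, and let E(A_1,A_2) = { x ∈ (0,1) irrational : c_1·A_1^n ≤ a_n(x) < 2·c_1·A_1^n and c_2·A_2^n ≤ a_{n+1}(x) < 2·c_2·A_2^n for infinitely many n ∈ ℕ }. Then dim_H E(A_1,A_2) = min{ s_{A_1}, g_{A_1·A_2, A_1} }. -/

import Mathlib

open Filter MeasureTheory Set

/-- The Gauss map `T(x) = 1/x - ⌊1/x⌋`. -/
noncomputable def gaussMap (x : ℝ) : ℝ := 1 / x - (⌊1 / x⌋ : ℤ)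

/-- The `n`-th partial quotient `a_n(x)` (for `n ≥ 1`) of the continued
fraction expansion of `x`: `a_n(x) = ⌊1 / T^{n-1}(x)⌋`. -/
noncomputable def pq (x : ℝ) (n : ℕ) : ℕ := ⌊1 / (gaussMap^[n - 1] x)⌋₊

/-- The continuant `q_n(a_1, …, a_n)`: `q_0 = 1`, `q_1 = a_1`,
`q_k = a_k q_{k-1} + q_{k-2}`. -/
def contQ : (n : ℕ) → (Fin n → ℕ) → ℕ
  | 0, _ => 1
  | 1, a => a 0
  | (n + 2), a =>
      a (Fin.last (n + 1)) * contQ (n + 1) (Fin.init a) +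
        contQ n (Fin.init (Fin.init a))

/-- `s_B`: the Wang–Wu pressure exponent. -/
noncomputable def sExp (B : ℝ) : ℝ :=
  sInf {s : ℝ | 0 ≤ s ∧
    Filter.atTop.limsup (fun n : ℕ =>
      (((n : ℝ)⁻¹ : ℝ) : EReal) * ENNReal.log (∑' a : Fin n → ℕ+,
        ENNReal.ofReal ((B ^ n * ((contQ n fun i => (a i : ℕ)) : ℝ) ^ 2) ^ (-s)))) ≤ 0}

/-- `g_{B₁,B₂}`: the two-parameter pressure exponent. -/
noncomputable def gExp (B₁ B₂ : ℝ) : ℝ :=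
  sInf {s : ℝ | 0 ≤ s ∧
    Filter.atTop.limsup (fun n : ℕ =>
      (((n : ℝ)⁻¹ : ℝ) : EReal) * ENNReal.log (∑' a : Fin n → ℕ+,
        ENNReal.ofReal (B₂ ^ ((1 - s) * (n : ℝ)) *
          (B₁ ^ n * ((contQ n fun i => (a i : ℕ)) : ℝ) ^ 2) ^ (-s)))) ≤ 0}

/-!
Write `P s` for the pressure of the Gauss map, the exponential growth rate of `∑ q_n ^ (-2 * s)`.
Unfolding the definitions, `s_{A₁}` and `g_{A₁A₂,A₁}` are the numbers where `P` crosses the lines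
`s * log A₁` and `(2 * s - 1) * log A₁ + s * log A₂`.

Upper bound: a digit `a_n ≥ R` confines `x` to a part of its cylinder of order `n - 1` of length at
most `(R * q_{n-1} ^ 2)⁻¹`. Using only `a_n ≈ A₁ ^ n` gives covers with
`∑ diam ^ s ≈ A₁ ^ (-s * n) * ∑ q_n ^ (-2 * s)`. Summing over the `≈ A₁ ^ n` possible values of
`a_n` and then using `a_{n+1} ≈ A₂ ^ n` gives
`A₁ ^ ((1 - 2 * s) * n) * A₂ ^ (-s * n) * ∑ q_n ^ (-2 * s)`. Either sum converges once `P s` lies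
below the corresponding line.

Lower bound: if `P s` lies above both lines, then there is a finite set of words of some length `L`
with `∑ q_L ^ (-2 * s)` much larger than `θ ^ L`, where
`θ = max (A₁ ^ s) (A₁ ^ (2 * s - 1) * A₂ ^ s)`. Concatenate such words freely, and insert a pair of
large digits whenever the surplus accumulated by the preceding words pays for it. Since a pair at
position `n` costs `θ ^ n` up to a constant, this happens infinitely often, and the mass
distribution principle bounds the dimension of the resulting Cantor set from below by `s`.
-/

namespace GaussCF

open ExpGrowth
open scoped ENNReal NNReal

/-! ### Continuants and inverse branches -/

/-- The product of the matrices `!![0, 1; 1, a]` over the digits `a` of a word of length `n`, which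
is `!![p (n-1), p n; q (n-1), q n]` in terms of the convergents `p k / q k`. -/
noncomputable def cfMatrix (w : List ℕ+) : Matrix (Fin 2) (Fin 2) ℝ :=
  (w.map fun a => !![0, 1; 1, ((a : ℕ) : ℝ)]).prod

/-- The continuant `q n` of a word of length `n`. -/
noncomputable def continuant (w : List ℕ+) : ℝ := cfMatrix w 1 1

/-- The inverse branch of an iterate of the Gauss map given by a word: the continued fraction
`[a₁, …, aₙ + t]`. -/
noncomputable def branch : List ℕ+ → ℝ → ℝ
  | [], t => t
  | a :: w, t => 1 / (((a : ℕ) : ℝ) + branch w t)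

/-- The denominator `q (n-1) * t + q n` of the Möbius map `branch w`. -/
noncomputable def branchDenom (w : List ℕ+) (t : ℝ) : ℝ := cfMatrix w 1 0 * t + continuant w

section Words

variable {t t' : ℝ}

lemma one_le_digit (a : ℕ+) : (1 : ℝ) ≤ (a : ℕ) := mod_cast a.pos

lemma cfMatrix_cons (a : ℕ+) (w : List ℕ+) :
    cfMatrix (a :: w) = !![0, 1; 1, ((a : ℕ) : ℝ)] * cfMatrix w := by
  simp [cfMatrix]

lemma cfMatrix_append (v w : List ℕ+) : cfMatrix (v ++ w) = cfMatrix v * cfMatrix w := by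
  simp [cfMatrix]

lemma cfMatrix_cons_zero (a : ℕ+) (w : List ℕ+) (j : Fin 2) :
    cfMatrix (a :: w) 0 j = cfMatrix w 1 j := by
  simp [cfMatrix_cons, Matrix.mul_apply]

lemma cfMatrix_cons_one (a : ℕ+) (w : List ℕ+) (j : Fin 2) :
    cfMatrix (a :: w) 1 j = cfMatrix w 0 j + (a : ℕ) * cfMatrix w 1 j := by
  simp [cfMatrix_cons, Matrix.mul_apply]

lemma cfMatrix_concat_zero (w : List ℕ+) (a : ℕ+) : cfMatrix (w ++ [a]) 1 0 = continuant w := by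
  simp [continuant, Matrix.mul_apply, cfMatrix]

@[simp]
lemma continuant_nil : continuant [] = 1 := by simp [continuant, cfMatrix]

lemma continuant_concat (w : List ℕ+) (a : ℕ+) :
    continuant (w ++ [a]) = cfMatrix w 1 0 + (a : ℕ) * continuant w := by
  simp [continuant, Matrix.mul_apply, cfMatrix, mul_comm]

lemma abs_det_cfMatrix (w : List ℕ+) : |(cfMatrix w).det| = 1 := by
  induction w with
  | nil => simp [cfMatrix]
  | cons a w ih => rw [cfMatrix_cons, Matrix.det_mul, Matrix.det_fin_two_of, abs_mul, ih]; simp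

lemma cfMatrix_nonneg (w : List ℕ+) (i j : Fin 2) : 0 ≤ cfMatrix w i j := by
  induction w generalizing i with
  | nil => fin_cases i <;> fin_cases j <;> simp [cfMatrix]
  | cons a w ih =>
    fin_cases i
    · simpa [cfMatrix_cons_zero] using ih 1
    · have := ih 0
      have := ih 1
      simp only [Fin.mk_one, cfMatrix_cons_one]
      positivity

lemma one_le_continuant_and_cfMatrix_le (w : List ℕ+) :
    1 ≤ continuant w ∧ cfMatrix w 1 0 ≤ continuant w := by
  induction w using List.reverseRecOn with
  | nil => simp [cfMatrix]
  | append_singleton w a ih =>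
    have := cfMatrix_nonneg w 1 0
    have := le_mul_of_one_le_left (zero_le_one.trans ih.1) (one_le_digit a)
    rw [continuant_concat, cfMatrix_concat_zero]
    constructor <;> linarith

lemma one_le_continuant (w : List ℕ+) : 1 ≤ continuant w := (one_le_continuant_and_cfMatrix_le w).1

lemma continuant_pos (w : List ℕ+) : 0 < continuant w := one_pos.trans_le (one_le_continuant w)

lemma cfMatrix_one_zero_le (w : List ℕ+) : cfMatrix w 1 0 ≤ continuant w :=
  (one_le_continuant_and_cfMatrix_le w).2

lemma cfMatrix_zero_one_le (w : List ℕ+) : cfMatrix w 0 1 ≤ continuant w := by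
  cases w with
  | nil => simp [cfMatrix]
  | cons a w =>
    have := cfMatrix_nonneg w 0 1
    have := le_mul_of_one_le_left (continuant_pos w).le (one_le_digit a)
    rw [cfMatrix_cons_zero, continuant, cfMatrix_cons_one]
    rw [continuant] at this
    linarith

lemma length_le_continuant (w : List ℕ+) : (w.length : ℝ) ≤ continuant w := by
  induction w using List.reverseRecOn with
  | nil => simp
  | append_singleton w a ih =>
    obtain rfl | ⟨v, b, rfl⟩ := w.eq_nil_or_concat'
    · simpa [continuant, cfMatrix] using one_le_digit a
    · have := one_le_continuant v
      have := le_mul_of_one_le_left (continuant_pos (v ++ [b])).le (one_le_digit a)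
      rw [continuant_concat (v ++ [b]), cfMatrix_concat_zero, List.length_append,
        List.length_singleton, Nat.cast_add, Nat.cast_one]
      linarith

lemma digit_mul_continuant_le (w : List ℕ+) (a : ℕ+) :
    ((a : ℕ) : ℝ) * continuant w ≤ continuant (w ++ [a]) := by
  rw [continuant_concat]
  exact le_add_of_nonneg_left (cfMatrix_nonneg w 1 0)

lemma continuant_append (v w : List ℕ+) :
    continuant (v ++ w) = cfMatrix v 1 0 * cfMatrix w 0 1 + continuant v * continuant w := by
  simp [continuant, cfMatrix_append, Matrix.mul_apply]

lemma continuant_append_le (v w : List ℕ+) :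
    continuant (v ++ w) ≤ 2 * (continuant v * continuant w) := by
  rw [continuant_append, two_mul]
  gcongr
  · exact cfMatrix_nonneg w 0 1
  · exact (continuant_pos v).le
  · exact cfMatrix_one_zero_le v
  · exact cfMatrix_zero_one_le w

lemma contQ_eq_continuant : ∀ (n : ℕ) (a : Fin n → ℕ+),
    (contQ n (fun i => (a i : ℕ)) : ℝ) = continuant (List.ofFn a)
  | 0, a => by simp [contQ]
  | 1, a => by simp [contQ, continuant, cfMatrix]
  | n + 2, a => by
    have concat {m : ℕ} (b : Fin (m + 1) → ℕ+) :
        List.ofFn b = List.ofFn (Fin.init b) ++ [b (Fin.last m)] := by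
      rw [List.ofFn_succ', List.concat_eq_append]; rfl
    have init {m : ℕ} (b : Fin (m + 1) → ℕ+) :
        Fin.init (fun i => (b i : ℕ)) = fun i => (Fin.init b i : ℕ) := rfl
    rw [contQ, init, init, concat, continuant_concat]
    conv_rhs => rw [concat (Fin.init a), cfMatrix_concat_zero, ← concat]
    push_cast
    rw [contQ_eq_continuant (n + 1), contQ_eq_continuant n, add_comm]

lemma branch_nonneg (w : List ℕ+) (ht : 0 ≤ t) : 0 ≤ branch w t := by
  induction w with
  | nil => exact ht
  | cons a w ih => simp only [branch]; positivity

lemma branch_mem_Icc (w : List ℕ+) (ht : t ∈ Icc (0 : ℝ) 1) : branch w t ∈ Icc (0 : ℝ) 1 := by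
  refine ⟨branch_nonneg w ht.1, ?_⟩
  cases w with
  | nil => exact ht.2
  | cons a w =>
    exact div_le_one_of_le₀ (le_add_of_le_of_nonneg (one_le_digit a) (branch_nonneg w ht.1))
      (by have := branch_nonneg w ht.1; positivity)

lemma branch_mem_Ioo (w : List ℕ+) (ht : t ∈ Ioo (0 : ℝ) 1) : branch w t ∈ Ioo (0 : ℝ) 1 := by
  induction w with
  | nil => exact ht
  | cons a w ih =>
    have := one_le_digit a
    have := ih.1
    exact ⟨by rw [branch]; positivity, by rw [branch, div_lt_one (by positivity)]; linarith⟩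

lemma branch_append (v w : List ℕ+) (t : ℝ) : branch (v ++ w) t = branch v (branch w t) := by
  induction v with
  | nil => rfl
  | cons a v ih => simp only [List.cons_append, branch, ih]

lemma continuant_le_branchDenom (w : List ℕ+) (ht : 0 ≤ t) : continuant w ≤ branchDenom w t :=
  le_add_of_nonneg_left (mul_nonneg (cfMatrix_nonneg w 1 0) ht)

lemma branchDenom_pos (w : List ℕ+) (ht : 0 ≤ t) : 0 < branchDenom w t :=
  (continuant_pos w).trans_le (continuant_le_branchDenom w ht)

lemma branchDenom_le (w : List ℕ+) (ht : t ∈ Icc (0 : ℝ) 1) :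
    branchDenom w t ≤ 2 * continuant w := by
  rw [branchDenom, two_mul]
  gcongr
  exact (mul_le_of_le_one_right (cfMatrix_nonneg w 1 0) ht.2).trans (cfMatrix_one_zero_le w)

lemma branch_eq_div (w : List ℕ+) (ht : 0 ≤ t) :
    branch w t = (cfMatrix w 0 0 * t + cfMatrix w 0 1) / branchDenom w t := by
  induction w with
  | nil => simp [branch, branchDenom, cfMatrix]
  | cons a w ih =>
    have hw := (branchDenom_pos w ht).ne'
    have denom_cons : branchDenom (a :: w) t =
        cfMatrix w 0 0 * t + cfMatrix w 0 1 + (a : ℕ) * branchDenom w t := by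
      simp only [branchDenom, continuant, cfMatrix_cons_one]
      ring
    rw [branch, ih, denom_cons, cfMatrix_cons_zero, cfMatrix_cons_zero,
      ← continuant, ← branchDenom, add_comm, div_add' _ _ _ hw, one_div_div]

lemma abs_branch_sub_branch (w : List ℕ+) (ht : 0 ≤ t) (ht' : 0 ≤ t') :
    |branch w t - branch w t'| = |t - t'| / (branchDenom w t * branchDenom w t') := by
  have h := branchDenom_pos w ht
  have h' := branchDenom_pos w ht'
  have sub_eq : branch w t - branch w t' =
      (cfMatrix w).det * (t - t') / (branchDenom w t * branchDenom w t') := by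
    rw [branch_eq_div w ht, branch_eq_div w ht', div_sub_div _ _ h.ne' h'.ne', Matrix.det_fin_two]
    congr 1
    simp only [branchDenom, continuant]
    ring
  rw [sub_eq, abs_div, abs_mul, abs_det_cfMatrix, one_mul, abs_of_pos (mul_pos h h')]

lemma abs_branch_sub_branch_le (w : List ℕ+) (ht : 0 ≤ t) (ht' : 0 ≤ t') :
    |branch w t - branch w t'| ≤ |t - t'| / continuant w ^ 2 := by
  have := continuant_pos w
  rw [abs_branch_sub_branch w ht ht', sq]
  gcongr
  · exact (branchDenom_pos w ht).le
  · exact continuant_le_branchDenom w ht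
  · exact continuant_le_branchDenom w ht'

lemma le_abs_branch_sub_branch (w : List ℕ+) (ht : t ∈ Icc (0 : ℝ) 1) (ht' : t' ∈ Icc (0 : ℝ) 1) :
    |t - t'| / (4 * continuant w ^ 2) ≤ |branch w t - branch w t'| := by
  have := branchDenom_pos w ht.1
  have := branchDenom_pos w ht'.1
  rw [abs_branch_sub_branch w ht.1 ht'.1,
    show 4 * continuant w ^ 2 = 2 * continuant w * (2 * continuant w) by ring]
  have := continuant_pos w
  gcongr
  · exact branchDenom_le w ht
  · exact branchDenom_le w ht'

end Words

section GaussMap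

variable {x t : ℝ}

lemma gaussMap_one_div_add (a : ℕ) (ht : t ∈ Ico (0 : ℝ) 1) : gaussMap (1 / (a + t)) = t := by
  have : ⌊(a : ℝ) + t⌋ = a :=
    Int.floor_eq_iff.2 ⟨by push_cast; linarith [ht.1], by push_cast; linarith [ht.2]⟩
  simp [gaussMap, this]

lemma pq_add_two (x : ℝ) (n : ℕ) : pq x (n + 2) = pq (gaussMap x) (n + 1) := by
  simp [pq, Function.iterate_succ_apply]

lemma pq_branch (v : List ℕ+) (a : ℕ+) (w : List ℕ+) (ht : t ∈ Ioo (0 : ℝ) 1) :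
    pq (branch (v ++ a :: w) t) (v.length + 1) = a := by
  induction v with
  | nil =>
    have hw := branch_mem_Ioo w ht
    rw [List.nil_append, branch, List.length_nil, pq, Nat.zero_add, Nat.sub_self,
      Function.iterate_zero_apply, one_div_one_div, add_comm, Nat.floor_add_natCast hw.1.le,
      Nat.floor_eq_zero.2 hw.2, zero_add]
  | cons b v ih =>
    rw [List.length_cons, pq_add_two, List.cons_append, branch,
      gaussMap_one_div_add b (Ioo_subset_Ico_self (branch_mem_Ioo _ ht)), ih]

lemma irrational_gaussMap (hx : Irrational x) : Irrational (gaussMap x) := by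
  rw [gaussMap, one_div]
  exact (irrational_inv_iff.2 hx).sub_intCast _

lemma gaussMap_mem_Ioo (hx : Irrational x) : gaussMap x ∈ Ioo (0 : ℝ) 1 :=
  ⟨lt_of_le_of_ne (Int.fract_nonneg _) (irrational_gaussMap hx).ne_zero.symm, Int.fract_lt_one _⟩

lemma iterate_gaussMap_mem_Ioo (hx : x ∈ Ioo (0 : ℝ) 1) (hirr : Irrational x) (n : ℕ) :
    gaussMap^[n] x ∈ Ioo (0 : ℝ) 1 ∧ Irrational (gaussMap^[n] x) := by
  induction n with
  | zero => exact ⟨hx, hirr⟩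
  | succ n ih =>
    rw [Function.iterate_succ_apply']
    exact ⟨gaussMap_mem_Ioo ih.2, irrational_gaussMap ih.2⟩

lemma exists_digit (hx : x ∈ Ioo (0 : ℝ) 1) (hirr : Irrational x) (n : ℕ) :
    ∃ a : ℕ+, (a : ℕ) = pq x (n + 1) ∧ gaussMap^[n] x = branch [a] (gaussMap^[n + 1] x) := by
  obtain ⟨⟨h0, h1⟩, -⟩ := iterate_gaussMap_mem_Ioo hx hirr n
  have one_le : 1 ≤ 1 / gaussMap^[n] x := (one_le_div h0).2 h1.le
  refine ⟨⟨pq x (n + 1), Nat.floor_pos.2 one_le⟩, rfl, ?_⟩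
  have floor_eq : (⌊1 / gaussMap^[n] x⌋₊ : ℝ) = (⌊1 / gaussMap^[n] x⌋ : ℤ) :=
    natCast_floor_eq_intCast_floor (by positivity)
  simp only [branch, pq, PNat.mk_coe, Nat.add_sub_cancel, floor_eq, Function.iterate_succ_apply']
  rw [gaussMap, add_sub_cancel, one_div_one_div]

lemma exists_eq_branch_iterate (hx : x ∈ Ioo (0 : ℝ) 1) (hirr : Irrational x) (n : ℕ) :
    ∃ a : Fin n → ℕ+, x = branch (List.ofFn a) (gaussMap^[n] x) := by
  induction n with
  | zero => exact ⟨Fin.elim0, rfl⟩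
  | succ n ih =>
    obtain ⟨a, ha⟩ := ih
    obtain ⟨b, -, hb⟩ := exists_digit hx hirr n
    refine ⟨Fin.snoc a b, ?_⟩
    rw [List.ofFn_succ', List.concat_eq_append, branch_append]
    simp only [Fin.snoc_castSucc, Fin.snoc_last, ← hb]
    exact ha

lemma iterate_gaussMap_le_one_div {n : ℕ} {R : ℝ} (hx : x ∈ Ioo (0 : ℝ) 1) (hirr : Irrational x)
    (hR : 0 < R) (h : R ≤ pq x (n + 1)) : gaussMap^[n] x ≤ 1 / R := by
  obtain ⟨a, ha, hxa⟩ := exists_digit hx hirr n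
  have tail_pos := (iterate_gaussMap_mem_Ioo hx hirr (n + 1)).1.1
  rw [hxa, branch, branch, ha]
  gcongr
  linarith

end GaussMap

/-! ### Pressure -/

/-- The `n`-th partition function `∑ q_n ^ (-2 s)` of the Gauss map. -/
noncomputable def partitionSum (s : ℝ) (n : ℕ) : ℝ≥0∞ :=
  ∑' a : Fin n → ℕ+, ENNReal.ofReal (continuant (List.ofFn a) ^ (-(2 * s)))

/-- The pressure of the potential `-s log |T'|` for the Gauss map `T`. -/
noncomputable def pressure (s : ℝ) : EReal := expGrowthSup (partitionSum s)

/-- The first `s ≥ 0` at which the pressure falls below the line `α * s - β`. -/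
noncomputable def pressureRoot (α β : ℝ) : ℝ :=
  sInf {s : ℝ | 0 ≤ s ∧ pressure s ≤ ((α * s - β : ℝ) : EReal)}

section Pressure

variable {s s' α β θ B₁ B₂ : ℝ}

lemma expGrowthSup_pow_mul (hθ : 0 < θ) (u : ℕ → ℝ≥0∞) :
    expGrowthSup (fun n => ENNReal.ofReal θ ^ n * u n) = (Real.log θ : EReal) + expGrowthSup u := by
  have log_eq : ENNReal.log (ENNReal.ofReal θ) = (Real.log θ : EReal) :=
    ENNReal.log_ofReal_of_pos hθ
  have inf_eq : expGrowthInf (fun n => ENNReal.ofReal θ ^ n) = (Real.log θ : EReal) :=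
    expGrowthInf_pow.trans log_eq
  have sup_eq : expGrowthSup (fun n => ENNReal.ofReal θ ^ n) = (Real.log θ : EReal) :=
    expGrowthSup_pow.trans log_eq
  apply le_antisymm
  · rw [← sup_eq]
    exact expGrowthSup_mul_le (.inl (by simp [sup_eq])) (.inl (by simp [sup_eq]))
  · rw [← inf_eq]
    exact le_expGrowthSup_mul'

lemma limsup_inv_mul_log_eq (u : ℕ → ℝ≥0∞) :
    limsup (fun n : ℕ => (((n : ℝ)⁻¹ : ℝ) : EReal) * ENNReal.log (u n)) atTop =
      expGrowthSup u := by
  rw [expGrowthSup]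
  congr! 2 with n
  rw [mul_comm, EReal.coe_inv]
  rfl

lemma limsup_log_tsum_nonpos_iff (hθ : 0 < θ) {f : ∀ n, (Fin n → ℕ+) → ℝ}
    (hf : ∀ n a, f n a = θ ^ n * continuant (List.ofFn a) ^ (-(2 * s))) :
    limsup (fun n : ℕ => (((n : ℝ)⁻¹ : ℝ) : EReal) *
      ENNReal.log (∑' a : Fin n → ℕ+, ENNReal.ofReal (f n a))) atTop ≤ 0 ↔
      pressure s ≤ ((-Real.log θ : ℝ) : EReal) := by
  have tsum_eq (n : ℕ) :
      ∑' a, ENNReal.ofReal (f n a) = ENNReal.ofReal θ ^ n * partitionSum s n := by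
    rw [partitionSum, ← ENNReal.tsum_mul_left]
    congr! 2 with a
    rw [hf, ENNReal.ofReal_mul (by positivity), ENNReal.ofReal_pow hθ.le]
  simp only [tsum_eq]
  rw [limsup_inv_mul_log_eq, expGrowthSup_pow_mul hθ, EReal.coe_neg, ← zero_sub, pressure,
    EReal.le_sub_iff_add_le (by simp) (by simp), add_comm]

lemma gExp_eq_pressureRoot (hB₁ : 0 < B₁) (hB₂ : 0 < B₂) :
    gExp B₁ B₂ = pressureRoot (Real.log B₁ + Real.log B₂) (Real.log B₂) := by
  rw [gExp, pressureRoot]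
  congr! 4 with s
  refine (limsup_log_tsum_nonpos_iff (s := s) (θ := B₂ ^ (1 - s) * B₁ ^ (-s)) (by positivity)
    fun n a => ?_).trans ?_
  · have := continuant_pos (List.ofFn a)
    rw [contQ_eq_continuant, Real.mul_rpow (by positivity) (by positivity), mul_pow, mul_assoc,
      Real.rpow_mul_natCast hB₂.le, ← Real.rpow_natCast_mul hB₁.le, mul_comm (n : ℝ),
      Real.rpow_mul_natCast hB₁.le, ← Real.rpow_natCast_mul this.le, Nat.cast_ofNat,
      mul_neg]
  · rw [Real.log_mul (by positivity) (by positivity), Real.log_rpow hB₁, Real.log_rpow hB₂]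
    ring_nf

lemma sExp_eq_pressureRoot (hB₁ : 0 < B₁) : sExp B₁ = pressureRoot (Real.log B₁) 0 := by
  have : sExp B₁ = gExp B₁ 1 := by simp only [sExp, gExp, Real.one_rpow, one_mul]
  rw [this, gExp_eq_pressureRoot hB₁ one_pos, Real.log_one, add_zero]

lemma pressure_antitone : Antitone pressure := by
  intro s s' h
  refine expGrowthSup_monotone fun n => ENNReal.tsum_le_tsum fun a => ?_
  gcongr
  exact one_le_continuant _

lemma tsum_telescope_le {p q : ℝ} (hp : 0 ≤ p) (hq : 0 < q) :
    ∑' a : ℕ+, ENNReal.ofReal (((p + (a : ℕ) * q) * (p + (a : ℕ) * q + q))⁻¹) ≤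
      ENNReal.ofReal ((q * (q + p))⁻¹) := by
  have sub_eq (i : ℕ) : ((p + (i + 1 : ℕ) * q) * (p + (i + 1 : ℕ) * q + q))⁻¹ =
      q⁻¹ * (p + (i + 1 : ℕ) * q)⁻¹ - q⁻¹ * (p + (i + 1 + 1 : ℕ) * q)⁻¹ := by
    push_cast
    field_simp
    ring
  rw [tsum_pnat_eq_tsum_succ
    (f := fun a : ℕ => ENNReal.ofReal (((p + a * q) * (p + a * q + q))⁻¹))]
  refine ENNReal.tsum_le_of_sum_range_le fun n => ?_
  rw [← ENNReal.ofReal_sum_of_nonneg fun i _ => by positivity]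
  apply ENNReal.ofReal_le_ofReal
  simp only [sub_eq]
  rw [Finset.sum_range_sub' fun i : ℕ => q⁻¹ * (p + (i + 1 : ℕ) * q)⁻¹]
  have : 0 ≤ q⁻¹ * (p + (n + 1 : ℕ) * q)⁻¹ := by positivity
  rw [mul_inv, zero_add, Nat.cast_one, one_mul, add_comm q p]
  exact sub_le_self _ this

/-- The summand is the length of the cylinder of the word, which is why the sum is at most `1`. -/
lemma tsum_inv_continuant_mul_le (n : ℕ) :
    ∑' a : Fin n → ℕ+, ENNReal.ofReal ((continuant (List.ofFn a) *
      (continuant (List.ofFn a) + cfMatrix (List.ofFn a) 1 0))⁻¹) ≤ 1 := by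
  induction n with
  | zero => simp [cfMatrix]
  | succ n ih =>
    rw [← (Fin.snocEquiv fun _ : Fin (n + 1) => ℕ+).tsum_eq, ENNReal.tsum_prod',
      ENNReal.tsum_comm]
    refine (ENNReal.tsum_le_tsum fun a => ?_).trans ih
    have snoc_eq (b : ℕ+) : List.ofFn (Fin.snocEquiv (fun _ : Fin (n + 1) => ℕ+) (b, a)) =
        List.ofFn a ++ [b] := by
      rw [List.ofFn_succ', List.concat_eq_append]
      simp [Fin.snocEquiv]
    simp only [snoc_eq, continuant_concat, cfMatrix_concat_zero]
    exact tsum_telescope_le (cfMatrix_nonneg _ 1 0) (continuant_pos _)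

lemma pressure_one_nonpos : pressure 1 ≤ 0 := by
  rw [pressure, ← expGrowthSup_const one_ne_zero ENNReal.one_ne_top]
  refine expGrowthSup_le_of_eventually_le ENNReal.ofNat_ne_top (.of_forall fun n => ?_) (b := 2)
  refine le_trans ?_ (mul_le_mul_right (tsum_inv_continuant_mul_le n) 2)
  rw [partitionSum, ← ENNReal.tsum_mul_left]
  refine ENNReal.tsum_le_tsum fun a => ?_
  have q_pos := continuant_pos (List.ofFn a)
  have p_nonneg := cfMatrix_nonneg (List.ofFn a) 1 0
  have p_le := cfMatrix_one_zero_le (List.ofFn a)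
  rw [← ENNReal.ofReal_ofNat, ← ENNReal.ofReal_mul zero_le_two, mul_one,
    Real.rpow_neg q_pos.le, Real.rpow_two, ← div_eq_mul_inv, ← one_div]
  apply ENNReal.ofReal_le_ofReal
  rw [div_le_div_iff₀ (by positivity) (by positivity)]
  nlinarith

lemma pressureRoot_nonneg (α β : ℝ) : 0 ≤ pressureRoot α β := Real.sInf_nonneg fun _ h => h.1

lemma lt_pressure_of_lt_pressureRoot (hs : 0 ≤ s) (h : s < pressureRoot α β) :
    ((α * s - β : ℝ) : EReal) < pressure s := by
  by_contra! hle
  exact h.not_ge (csInf_le ⟨0, fun _ h => h.1⟩ ⟨hs, hle⟩)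

lemma pressure_lt_of_pressureRoot_lt (hα : 0 < α) (hβ : β ≤ α) (h : pressureRoot α β < s) :
    pressure s < ((α * s - β : ℝ) : EReal) := by
  have one_mem : 0 ≤ (1 : ℝ) ∧ pressure 1 ≤ ((α * 1 - β : ℝ) : EReal) :=
    ⟨zero_le_one, pressure_one_nonpos.trans (mod_cast by linarith)⟩
  obtain ⟨r, ⟨-, hr⟩, hrs⟩ := exists_lt_of_csInf_lt ⟨1, one_mem⟩ h
  calc pressure s ≤ pressure r := pressure_antitone hrs.le
    _ ≤ ((α * r - β : ℝ) : EReal) := hr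
    _ < ((α * s - β : ℝ) : EReal) := by
      rw [EReal.coe_lt_coe_iff]
      gcongr

end Pressure

section HausdorffCantelli

variable {X : Type*} [EMetricSpace X] {s : ℝ}

lemma hausdorffMeasure_setOf_infinite_eq_zero [MeasurableSpace X] [BorelSpace X] {ι : Type*}
    [Countable ι] (hs : 0 < s) (U : ι → Set X) (h : ∑' i, Metric.ediam (U i) ^ s ≠ ∞) :
    μH[s] {x | {i | x ∈ U i}.Infinite} = 0 := by
  have tail := ENNReal.tendsto_tsum_compl_atTop_zero h
  have radius : Tendsto (fun F : Finset ι =>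
      (∑' i : {i // i ∉ F}, Metric.ediam (U i) ^ s) ^ s⁻¹) atTop (nhds 0) := by
    simpa [ENNReal.zero_rpow_of_pos (inv_pos.2 hs)] using tail.ennrpow_const s⁻¹
  refine le_antisymm ?_ zero_le
  rw [← tail.liminf_eq]
  refine Measure.hausdorffMeasure_le_liminf_tsum s _ _ radius
    (fun F (i : {i // i ∉ F}) => U i)
    (.of_forall fun F i => ?_) (.of_forall fun F x hx => ?_)
  · rw [ENNReal.le_rpow_inv_iff hs]
    exact ENNReal.le_tsum (f := fun i : {i // i ∉ F} => Metric.ediam (U i) ^ s) i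
  · obtain ⟨i, hi, hiF⟩ := hx.exists_notMem_finset F
    exact mem_iUnion.2 ⟨⟨i, hiF⟩, hi⟩

lemma exists_tsum_add_ne_top_of_expGrowthSup_neg {u : ℕ → ℝ≥0∞} (h : expGrowthSup u < 0) :
    ∃ N, ∑' n, u (n + N) ≠ ∞ := by
  obtain ⟨c, hc, hc0⟩ := EReal.lt_iff_exists_real_btwn.1 h
  obtain ⟨N, hN⟩ := eventually_atTop.1 (eventually_le_exp hc)
  have ratio_lt : Real.exp c < 1 := Real.exp_lt_one_iff.2 (mod_cast hc0)
  have exp_eq (n : ℕ) : EReal.exp (c * n) = ENNReal.ofReal (Real.exp c ^ n) := by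
    rw [← Real.exp_nat_mul, mul_comm, ← EReal.exp_coe]
    push_cast
    rfl
  have summable : Summable fun n : ℕ => Real.exp c ^ (n + N) :=
    (summable_nat_add_iff N).2 (summable_geometric_of_lt_one (Real.exp_nonneg c) ratio_lt)
  exact ⟨N, ne_top_of_le_ne_top summable.tsum_ofReal_ne_top
    (ENNReal.tsum_le_tsum fun n => (hN _ (Nat.le_add_left N n)).trans_eq (exp_eq _))⟩

lemma dimH_le_of_expGrowthSup_tsum_ediam_neg {ι : ℕ → Type*} [∀ n, Countable (ι n)] (hs : 0 < s)
    (U : ∀ n, ι n → Set X) (hU : expGrowthSup (fun n => ∑' i, Metric.ediam (U n i) ^ s) < 0)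
    {E : Set X} (hE : ∀ x ∈ E, ∃ᶠ n in atTop, ∃ i, x ∈ U n i) :
    dimH E ≤ ENNReal.ofReal s := by
  borelize X
  obtain ⟨N, hN⟩ := exists_tsum_add_ne_top_of_expGrowthSup_neg hU
  rw [← ENNReal.tsum_sigma fun n (i : ι (n + N)) => Metric.ediam (U (n + N) i) ^ s] at hN
  have null := hausdorffMeasure_setOf_infinite_eq_zero hs
    (fun p : Σ n, ι (n + N) => U (p.1 + N) p.2) hN
  have subset : E ⊆ {x | {p : Σ n, ι (n + N) | x ∈ U (p.1 + N) p.2}.Infinite} := by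
    intro x hx
    refine Set.Infinite.of_image Sigma.fst (Set.infinite_of_not_bddAbove ?_)
    rintro ⟨M, hM⟩
    obtain ⟨n, hn, i, hi⟩ := frequently_atTop.1 (hE x hx) (M + 1 + N)
    obtain ⟨k, rfl⟩ := Nat.exists_eq_add_of_le' (le_of_add_le_right hn)
    have := hM (mem_image_of_mem Sigma.fst (show x ∈ U ((⟨k, i⟩ : Σ n, ι (n + N)).1 + N) i from hi))
    grind
  have := dimH_le_of_hausdorffMeasure_ne_top (s := E) (d := s.toNNReal) (by
    rw [Real.coe_toNNReal _ hs.le, measure_mono_null subset null]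
    exact ENNReal.zero_ne_top)
  exact this

end HausdorffCantelli

/-! ### The upper bound -/

/-- The irrationals in `(0, 1)` for which infinitely often `a_n` is of size `R₁ n` and `a_{n+1}`
is of size `R₂ n`, up to a factor in `[1, 2)`. -/
def consecutiveLargeDigits (R₁ R₂ : ℕ → ℝ) : Set ℝ :=
  {x : ℝ | x ∈ Ioo (0 : ℝ) 1 ∧ Irrational x ∧
    {n : ℕ | (R₁ n ≤ (pq x n : ℝ) ∧ (pq x n : ℝ) < 2 * R₁ n) ∧
      (R₂ n ≤ (pq x (n + 1) : ℝ) ∧ (pq x (n + 1) : ℝ) < 2 * R₂ n)}.Infinite}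

/-- The digits in `[R, 2 * R)`. -/
noncomputable def digitRange (R : ℝ) : Finset ℕ+ :=
  Finset.Ico ⌈R⌉₊.toPNat' ⌈2 * R⌉₊.toPNat'

section UpperBound

variable {s R θ : ℝ} {C : ℝ} {R₁ R₂ : ℕ → ℝ}

lemma mem_digitRange (hR : 0 < R) {a : ℕ+} :
    a ∈ digitRange R ↔ R ≤ (a : ℕ) ∧ ((a : ℕ) : ℝ) < 2 * R := by
  rw [digitRange, Finset.mem_Ico, ← PNat.coe_le_coe, ← PNat.coe_lt_coe,
    PNat.toPNat'_coe (Nat.ceil_pos.2 hR), PNat.toPNat'_coe (Nat.ceil_pos.2 (by positivity)),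
    Nat.ceil_le, Nat.lt_ceil]

lemma card_digitRange (hR : 0 < R) : (digitRange R).card = ⌈2 * R⌉₊ - ⌈R⌉₊ := by
  rw [digitRange, PNat.card_Ico, PNat.toPNat'_coe (Nat.ceil_pos.2 hR),
    PNat.toPNat'_coe (Nat.ceil_pos.2 (by positivity))]

lemma card_digitRange_le (hR : 0 < R) : ((digitRange R).card : ℝ) ≤ 2 * R := by
  have one_le : (1 : ℝ) ≤ ⌈R⌉₊ := mod_cast Nat.ceil_pos.2 hR
  rw [card_digitRange hR, Nat.cast_sub (Nat.ceil_mono (by linarith))]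
  linarith [Nat.ceil_lt_add_one (show 0 ≤ 2 * R by linarith)]

lemma frequently_pq_mem {x : ℝ} (hx : x ∈ consecutiveLargeDigits R₁ R₂) :
    ∃ᶠ n in atTop,
      (R₁ (n + 1) ≤ pq x (n + 1) ∧ (pq x (n + 1) : ℝ) < 2 * R₁ (n + 1)) ∧
      (R₂ (n + 1) ≤ pq x (n + 2) ∧ (pq x (n + 2) : ℝ) < 2 * R₂ (n + 1)) := by
  refine frequently_atTop.2 fun N => ?_
  obtain ⟨n, hn, hN⟩ := hx.2.2.exists_gt N
  obtain ⟨m, rfl⟩ := Nat.exists_eq_add_of_lt hN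
  exact ⟨N + m, Nat.le_add_right N m, hn⟩

lemma ediam_image_branch_rpow_le (w : List ℕ+) (hR : 0 < R) (hs : 0 ≤ s) :
    Metric.ediam (branch w '' Icc 0 (1 / R)) ^ s ≤
      ENNReal.ofReal (R ^ (-s) * continuant w ^ (-(2 * s))) := by
  have q_pos := continuant_pos w
  have ediam_le : Metric.ediam (branch w '' Icc 0 (1 / R)) ≤
      ENNReal.ofReal ((R * continuant w ^ 2)⁻¹) := by
    refine Metric.ediam_le_of_forall_dist_le ?_
    rintro _ ⟨t, ht, rfl⟩ _ ⟨t', ht', rfl⟩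
    refine (abs_branch_sub_branch_le w ht.1 ht'.1).trans ?_
    rw [mul_inv, ← one_div R, ← div_eq_mul_inv]
    gcongr
    exact abs_sub_le_iff.2 ⟨by linarith [ht.2, ht'.1], by linarith [ht.1, ht'.2]⟩
  refine (ENNReal.rpow_le_rpow ediam_le hs).trans_eq ?_
  rw [ENNReal.ofReal_rpow_of_nonneg (by positivity) hs, Real.inv_rpow (by positivity),
    ← Real.rpow_neg (by positivity), Real.mul_rpow hR.le (by positivity),
    ← Real.rpow_natCast_mul q_pos.le, Nat.cast_ofNat, mul_neg]

lemma dimH_le_of_tsum_ediam_le {ι : ℕ → Type*} [∀ n, Countable (ι n)] {U : ∀ n, ι n → Set ℝ}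
    {E : Set ℝ} {v : ℕ → ℝ} (hs : 0 < s) (hθ : 0 < θ) (hv : ∀ n, 0 < v n)
    (hθv : ∀ n, θ ^ n ≤ C * v n) (hpressure : pressure s < (Real.log θ : EReal))
    (hE : ∀ x ∈ E, ∃ᶠ n in atTop, ∃ i, x ∈ U n i)
    (hU : ∀ n, ∑' i, Metric.ediam (U n i) ^ s ≤
      ENNReal.ofReal (v (n + 1))⁻¹ * partitionSum s n) : dimH E ≤ ENNReal.ofReal s := by
  refine dimH_le_of_expGrowthSup_tsum_ediam_neg hs U ?_ hE
  have inv_le (n : ℕ) : (v (n + 1))⁻¹ ≤ C / θ * θ⁻¹ ^ n := by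
    rw [inv_pow, ← div_eq_mul_inv, div_div, ← pow_succ', inv_le_iff_one_le_mul₀ (hv _),
      div_mul_eq_mul_div, one_le_div (by positivity)]
    exact hθv (n + 1)
  have bound (n : ℕ) : ∑' i, Metric.ediam (U n i) ^ s ≤
      ENNReal.ofReal (C / θ) * (ENNReal.ofReal θ⁻¹ ^ n * partitionSum s n) := by
    rw [← mul_assoc, ← ENNReal.ofReal_pow (by positivity), ← ENNReal.ofReal_mul' (by positivity)]
    exact (hU n).trans (mul_le_mul_left (ENNReal.ofReal_le_ofReal (inv_le n)) _)
  refine (expGrowthSup_le_of_eventually_le ENNReal.ofReal_ne_top (.of_forall bound)).trans_lt ?_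
  rwa [expGrowthSup_pow_mul (inv_pos.2 hθ), Real.log_inv, add_comm,
    ← EReal.lt_sub_iff_add_lt (by simp) (by simp), zero_sub, EReal.coe_neg, neg_neg]

lemma dimH_le_of_pow_le_rpow (hs : 0 < s) (hθ : 0 < θ) (hR₁ : ∀ n, 0 < R₁ n)
    (h : ∀ n, θ ^ n ≤ C * R₁ n ^ s) (hpressure : pressure s < (Real.log θ : EReal)) :
    dimH (consecutiveLargeDigits R₁ R₂) ≤ ENNReal.ofReal s := by
  refine dimH_le_of_tsum_ediam_le (ι := fun n => Fin n → ℕ+)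
    (U := fun n a => branch (List.ofFn a) '' Icc 0 (1 / R₁ (n + 1)))
    hs hθ (fun n => Real.rpow_pos_of_pos (hR₁ n) s) h hpressure (fun x hx => ?_) fun n => ?_
  · refine (frequently_pq_mem hx).mono fun n hn => ?_
    obtain ⟨a, ha⟩ := exists_eq_branch_iterate hx.1 hx.2.1 n
    exact ⟨a, _, ⟨(iterate_gaussMap_mem_Ioo hx.1 hx.2.1 n).1.1.le,
      iterate_gaussMap_le_one_div hx.1 hx.2.1 (hR₁ _) hn.1.1⟩, ha.symm⟩
  · have := hR₁ (n + 1)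
    rw [partitionSum, ← ENNReal.tsum_mul_left]
    refine ENNReal.tsum_le_tsum fun a => (ediam_image_branch_rpow_le _ this hs.le).trans_eq ?_
    rw [ENNReal.ofReal_mul (by positivity), Real.rpow_neg this.le]

lemma tsum_digitRange_ediam_rpow_le {r r' : ℝ} (w : List ℕ+) (hr : 0 < r) (hr' : 0 < r')
    (hs : 0 ≤ s) :
    ∑' b : digitRange r, Metric.ediam (branch (w ++ [b.1]) '' Icc 0 (1 / r')) ^ s ≤
      ENNReal.ofReal ((r ^ (2 * s - 1) * r' ^ s / 2)⁻¹ * continuant w ^ (-(2 * s))) := by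
  have q_pos := continuant_pos w
  have term_le (b : digitRange r) :
      Metric.ediam (branch (w ++ [b.1]) '' Icc 0 (1 / r')) ^ s ≤
        ENNReal.ofReal (r' ^ (-s) * (r * continuant w) ^ (-(2 * s))) := by
    refine (ediam_image_branch_rpow_le _ hr' hs).trans (ENNReal.ofReal_le_ofReal ?_)
    gcongr ?_ * ?_
    refine Real.rpow_le_rpow_of_nonpos (by positivity) ?_ (by linarith)
    exact (mul_le_mul_of_nonneg_right ((mem_digitRange hr).1 b.2).1 q_pos.le).trans
      (digit_mul_continuant_le w b)
  refine (ENNReal.tsum_le_tsum term_le).trans ?_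
  rw [tsum_fintype, Finset.sum_const, Finset.card_univ, Fintype.card_coe, nsmul_eq_mul,
    ← ENNReal.ofReal_natCast, ← ENNReal.ofReal_mul (by positivity)]
  apply ENNReal.ofReal_le_ofReal
  calc ((digitRange r).card : ℝ) * (r' ^ (-s) * (r * continuant w) ^ (-(2 * s)))
      ≤ 2 * r * (r' ^ (-s) * (r * continuant w) ^ (-(2 * s))) := by
        gcongr
        exact card_digitRange_le hr
    _ = (r ^ (2 * s - 1) * r' ^ s / 2)⁻¹ * continuant w ^ (-(2 * s)) := by
        rw [Real.mul_rpow hr.le q_pos.le, Real.rpow_neg hr.le, Real.rpow_neg hr'.le,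
          Real.rpow_sub_one hr.ne']
        field_simp

lemma dimH_le_of_pow_le_rpow_mul_rpow (hs : 0 < s) (hθ : 0 < θ) (hR₁ : ∀ n, 0 < R₁ n)
    (hR₂ : ∀ n, 0 < R₂ n) (h : ∀ n, θ ^ n ≤ C * (R₁ n ^ (2 * s - 1) * R₂ n ^ s))
    (hpressure : pressure s < (Real.log θ : EReal)) :
    dimH (consecutiveLargeDigits R₁ R₂) ≤ ENNReal.ofReal s := by
  refine dimH_le_of_tsum_ediam_le (ι := fun n => (Fin n → ℕ+) × digitRange (R₁ (n + 1)))
    (v := fun n => R₁ n ^ (2 * s - 1) * R₂ n ^ s / 2) (C := C * 2)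
    (U := fun n p => branch (List.ofFn p.1 ++ [p.2.1]) '' Icc 0 (1 / R₂ (n + 1)))
    hs hθ (fun n => ?_) (fun n => ?_) hpressure (fun x hx => ?_) fun n => ?_
  · have := hR₁ n
    have := hR₂ n
    positivity
  · rw [mul_assoc, mul_div_cancel₀ _ two_ne_zero]
    exact h n
  · refine (frequently_pq_mem hx).mono fun n hn => ?_
    obtain ⟨a, ha⟩ := exists_eq_branch_iterate hx.1 hx.2.1 n
    obtain ⟨b, hb, hxb⟩ := exists_digit hx.1 hx.2.1 n
    have b_mem : b ∈ digitRange (R₁ (n + 1)) :=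
      (mem_digitRange (hR₁ _)).2 (by rw [hb]; exact hn.1)
    exact ⟨⟨a, b, b_mem⟩, _, ⟨(iterate_gaussMap_mem_Ioo hx.1 hx.2.1 (n + 1)).1.1.le,
      iterate_gaussMap_le_one_div hx.1 hx.2.1 (hR₂ _) hn.2.1⟩,
      by rw [branch_append, ← hxb, ← ha]⟩
  · rw [partitionSum, ← ENNReal.tsum_mul_left, ENNReal.tsum_prod']
    refine ENNReal.tsum_le_tsum fun a =>
      (tsum_digitRange_ediam_rpow_le (List.ofFn a) (hR₁ _) (hR₂ _) hs.le).trans_eq ?_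
    have := hR₁ (n + 1)
    have := hR₂ (n + 1)
    rw [ENNReal.ofReal_mul (by positivity)]

end UpperBound

section MassDistribution

variable {X α : Type*} {s : ℝ}

lemma le_dimH_of_measure_le_ediam_rpow [EMetricSpace X] [MeasurableSpace X] [BorelSpace X]
    {μ : Measure X} {E : Set X} {s : ℝ≥0} {C : ℝ≥0∞} (hC : C ≠ ∞) (hE : μ E ≠ 0)
    (hμ : ∀ U, IsClosed U → μ U ≤ C * Metric.ediam U ^ (s : ℝ)) : s ≤ dimH E := by
  have smul_le : C⁻¹ • μ ≤ μH[s] := by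
    refine Measure.le_hausdorffMeasure s _ 1 one_pos fun U _ => ?_
    calc C⁻¹ * μ U ≤ C⁻¹ * (C * Metric.ediam (closure U) ^ (s : ℝ)) := by
          gcongr
          exact (measure_mono subset_closure).trans (hμ _ isClosed_closure)
      _ ≤ Metric.ediam U ^ (s : ℝ) := by
          rw [Metric.ediam_closure, ← mul_assoc]
          exact mul_le_of_le_one_left zero_le (ENNReal.inv_mul_le_one C)
  refine le_dimH_of_hausdorffMeasure_ne_zero fun h => ?_
  have smul_eq : C⁻¹ * μ E = 0 := le_antisymm ((smul_le E).trans_eq h) zero_le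
  exact (mul_ne_zero (ENNReal.inv_ne_zero.2 hC) hE) smul_eq

lemma exists_subset_cylinder_of_nontrivial {S : Set (ℕ → α)} (hS : S.Nontrivial) :
    ∃ k, (∀ ω ∈ S, S ⊆ PiNat.cylinder ω k) ∧ (Function.eval k '' S).Nontrivial := by
  classical
  have exists_ne : ∃ k, (Function.eval k '' S).Nontrivial := by
    obtain ⟨ω, hω, ω', hω', hne⟩ := hS
    obtain ⟨k, hk⟩ := Function.ne_iff.1 hne
    exact ⟨k, _, mem_image_of_mem _ hω, _, mem_image_of_mem _ hω', hk⟩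
  refine ⟨Nat.find exists_ne, fun ω hω ω' hω' i hi => ?_, Nat.find_spec exists_ne⟩
  exact not_nontrivial_iff.1 (Nat.find_min exists_ne hi) (mem_image_of_mem _ hω')
    (mem_image_of_mem _ hω)

variable [MeasurableSpace α] {ν : ℕ → Measure α} [∀ k, IsProbabilityMeasure (ν k)] {F : ℕ → Set α}

lemma infinitePi_pi_univ_of_compl_null (hF : ∀ k, ν k (F k)ᶜ = 0) :
    Measure.infinitePi ν (Set.pi univ F)ᶜ = 0 := by
  have ae_mem : ∀ᵐ ω ∂Measure.infinitePi ν, ∀ k, ω k ∈ F k := ae_all_iff.2 fun k =>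
    (measurePreserving_eval_infinitePi ν k).quasiMeasurePreserving.ae (mem_ae_iff.2 (hF k))
  simpa [ae_iff, Set.compl_def, Set.mem_pi] using ae_mem

variable [DiscreteMeasurableSpace α]

lemma infinitePi_cylinder_inter (ω : ℕ → α) (k : ℕ) (D : Set α) :
    Measure.infinitePi ν (PiNat.cylinder ω k ∩ Function.eval k ⁻¹' D) =
      (∏ i ∈ Finset.range k, ν i {ω i}) * ν k D := by
  have cylinder_eq : PiNat.cylinder ω k ∩ Function.eval k ⁻¹' D =
      Set.pi (Finset.range (k + 1)) fun i => if i < k then {ω i} else D := by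
    ext ω'
    simp +contextual [PiNat.cylinder, Set.mem_pi, le_iff_lt_or_eq, or_imp, forall_and]
  rw [cylinder_eq, Measure.infinitePi_pi _ fun _ _ => .of_discrete, Finset.prod_range_succ,
    if_neg (lt_irrefl k)]
  congr 1
  exact Finset.prod_congr rfl fun i hi => by rw [if_pos (Finset.mem_range.1 hi)]

lemma infinitePi_singleton_of_tendsto {ω : ℕ → α}
    (h : Tendsto (fun k => ∏ i ∈ Finset.range k, ν i {ω i}) atTop (nhds 0)) :
    Measure.infinitePi ν {ω} = 0 := by
  refine le_antisymm (ge_of_tendsto' h fun k => ?_) zero_le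
  calc Measure.infinitePi ν {ω}
      ≤ Measure.infinitePi ν (PiNat.cylinder ω k ∩ Function.eval k ⁻¹' univ) :=
        measure_mono (singleton_subset_iff.2 ⟨PiNat.self_mem_cylinder ω k, mem_univ _⟩)
    _ = ∏ i ∈ Finset.range k, ν i {ω i} := by
        rw [infinitePi_cylinder_inter, measure_univ, mul_one]

variable [EMetricSpace X] {f : (ℕ → α) → X} {C : ℝ≥0∞}

lemma infinitePi_le_ediam_rpow (hs : 0 ≤ s)
    (hsep : ∀ ω ∈ Set.pi univ F, ∀ k, ∀ D ⊆ F k, D.Nontrivial → ∃ w ∈ D, ∃ w' ∈ D,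
      ∀ ω₁ ∈ PiNat.cylinder ω k ∩ Set.pi univ F, ∀ ω₂ ∈ PiNat.cylinder ω k ∩ Set.pi univ F,
        ω₁ k = w → ω₂ k = w' →
          (∏ i ∈ Finset.range k, ν i {ω i}) * ν k D ≤ C * edist (f ω₁) (f ω₂) ^ s)
    (hzero : ∀ ω ∈ Set.pi univ F,
      Tendsto (fun k => ∏ i ∈ Finset.range k, ν i {ω i}) atTop (nhds 0))
    {S : Set (ℕ → α)} (hS : S ⊆ Set.pi univ F) :
    Measure.infinitePi ν S ≤ C * Metric.ediam (f '' S) ^ s := by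
  obtain hsub | hnt := S.subsingleton_or_nontrivial
  · obtain rfl | ⟨ω, rfl⟩ := hsub.eq_empty_or_singleton
    · simp
    · simp [infinitePi_singleton_of_tendsto (hzero ω (hS rfl))]
  obtain ⟨k, hcyl, hk⟩ := exists_subset_cylinder_of_nontrivial hnt
  obtain ⟨ω, hω⟩ := hnt.nonempty
  obtain ⟨_, ⟨ω₁, hω₁, rfl⟩, _, ⟨ω₂, hω₂, rfl⟩, h⟩ := hsep ω (hS hω) k (Function.eval k '' S)
    (by rintro _ ⟨ω', hω', rfl⟩; exact hS hω' k (mem_univ k)) hk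
  calc Measure.infinitePi ν S
      ≤ Measure.infinitePi ν
          (PiNat.cylinder ω k ∩ Function.eval k ⁻¹' (Function.eval k '' S)) :=
        measure_mono (subset_inter (hcyl ω hω) (subset_preimage_image _ _))
    _ ≤ C * edist (f ω₁) (f ω₂) ^ s := by
        rw [infinitePi_cylinder_inter]
        exact h ω₁ ⟨hcyl ω hω hω₁, hS hω₁⟩ ω₂ ⟨hcyl ω hω hω₂, hS hω₂⟩ rfl rfl
    _ ≤ C * Metric.ediam (f '' S) ^ s := by
        gcongr
        exact Metric.edist_le_ediam_of_mem (mem_image_of_mem f hω₁) (mem_image_of_mem f hω₂)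

lemma le_dimH_image_pi_univ [MeasurableSpace X] [BorelSpace X] (hs : 0 ≤ s) (hC : C ≠ ∞)
    (hF : ∀ k, ν k (F k)ᶜ = 0) (hf : Measurable f)
    (hsep : ∀ ω ∈ Set.pi univ F, ∀ k, ∀ D ⊆ F k, D.Nontrivial → ∃ w ∈ D, ∃ w' ∈ D,
      ∀ ω₁ ∈ PiNat.cylinder ω k ∩ Set.pi univ F, ∀ ω₂ ∈ PiNat.cylinder ω k ∩ Set.pi univ F,
        ω₁ k = w → ω₂ k = w' →
          (∏ i ∈ Finset.range k, ν i {ω i}) * ν k D ≤ C * edist (f ω₁) (f ω₂) ^ s)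
    (hzero : ∀ ω ∈ Set.pi univ F,
      Tendsto (fun k => ∏ i ∈ Finset.range k, ν i {ω i}) atTop (nhds 0)) :
    ENNReal.ofReal s ≤ dimH (f '' Set.pi univ F) := by
  have compl_null := infinitePi_pi_univ_of_compl_null hF
  refine le_dimH_of_measure_le_ediam_rpow (μ := (Measure.infinitePi ν).map f) hC ?_ fun U hU => ?_
  · refine fun h => one_ne_zero (α := ℝ≥0∞) ?_
    rw [← measure_univ (μ := Measure.infinitePi ν), ← union_compl_self (Set.pi univ F)]
    refine measure_union_null (le_antisymm ?_ zero_le) compl_null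
    calc Measure.infinitePi ν (Set.pi univ F)
        ≤ Measure.infinitePi ν (f ⁻¹' (f '' Set.pi univ F)) :=
          measure_mono (subset_preimage_image f _)
      _ ≤ 0 := (Measure.le_map_apply hf.aemeasurable _).trans_eq h
  · rw [Measure.map_apply hf hU.measurableSet, Real.coe_toNNReal s hs]
    calc Measure.infinitePi ν (f ⁻¹' U)
        ≤ Measure.infinitePi ν (f ⁻¹' U ∩ Set.pi univ F) := by
          rw [measure_inter_conull compl_null]
      _ ≤ C * Metric.ediam (f '' (f ⁻¹' U ∩ Set.pi univ F)) ^ s :=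
          infinitePi_le_ediam_rpow hs hsep hzero inter_subset_right
      _ ≤ C * Metric.ediam U ^ s := by
          gcongr
          exact (image_mono inter_subset_left).trans (image_preimage_subset f U)

end MassDistribution

/-! ### Coding by sequences of words -/

/-- The concatenation `ω 0 ++ ⋯ ++ ω (k-1)`. -/
def concatWords (ω : ℕ → List ℕ+) : ℕ → List ℕ+
  | 0 => []
  | k + 1 => concatWords ω k ++ ω k

/-- The sequence `ω k, ω (k+1), …`. -/
def shift (k : ℕ) (ω : ℕ → List ℕ+) : ℕ → List ℕ+ := fun i => ω (k + i)

/-- The point whose continued fraction expansion is the infinite concatenation `ω 0 ++ ω 1 ++ ⋯`.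
Defining it by a `limsup` makes it measurable in `ω` without any assumption on convergence. -/
noncomputable def limitPoint (ω : ℕ → List ℕ+) : ℝ :=
  limsup (fun n => branch (concatWords ω n) 0) atTop

instance : MeasurableSpace (List ℕ+) := ⊤

instance : DiscreteMeasurableSpace (List ℕ+) := ⟨fun _ => trivial⟩

section LimitPoint

variable {ω ω' : ℕ → List ℕ+} {k : ℕ}

lemma le_length_concatWords (h : ∀ i, ω i ≠ []) (k : ℕ) : k ≤ (concatWords ω k).length := by
  induction k with
  | zero => exact Nat.zero_le _
  | succ k ih =>
    have := List.length_pos_iff.2 (h k)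
    simp only [concatWords, List.length_append]
    lia

lemma le_continuant_concatWords (h : ∀ i, ω i ≠ []) (k : ℕ) :
    (k : ℝ) ≤ continuant (concatWords ω k) :=
  (Nat.cast_le.2 (le_length_concatWords h k)).trans (length_le_continuant _)

lemma concatWords_add (ω : ℕ → List ℕ+) (k j : ℕ) :
    concatWords ω (k + j) = concatWords ω k ++ concatWords (shift k ω) j := by
  induction j with
  | zero => simp [concatWords]
  | succ j ih => rw [← add_assoc, concatWords, ih, concatWords, shift, List.append_assoc]

lemma shift_ne_nil (h : ∀ i, ω i ≠ []) (k : ℕ) : ∀ i, shift k ω i ≠ [] := fun i => h (k + i)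

lemma concatWords_congr (h : ∀ i < k, ω i = ω' i) : concatWords ω k = concatWords ω' k := by
  induction k with
  | zero => rfl
  | succ k ih =>
    rw [concatWords, concatWords, ih fun i hi => h i (hi.trans k.lt_succ_self),
      h k k.lt_succ_self]

lemma measurable_concatWords (k : ℕ) : Measurable fun ω : ℕ → List ℕ+ => concatWords ω k := by
  induction k with
  | zero => exact measurable_const
  | succ k ih =>
    have append : Measurable fun q : List ℕ+ × List ℕ+ => q.1 ++ q.2 := Measurable.of_discrete
    exact append.comp (ih.prodMk (measurable_pi_apply k))

lemma measurable_limitPoint : Measurable limitPoint := by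
  refine Measurable.limsup fun n => ?_
  have branch_zero : Measurable fun w : List ℕ+ => branch w 0 := Measurable.of_discrete
  exact branch_zero.comp (measurable_concatWords n)

lemma tendsto_limitPoint (h : ∀ i, ω i ≠ []) :
    Tendsto (fun n => branch (concatWords ω n) 0) atTop (nhds (limitPoint ω)) := by
  have cauchy : CauchySeq fun n => branch (concatWords ω (n + 1)) 0 := by
    refine cauchySeq_of_le_tendsto_0' (fun n : ℕ => 1 / ((n : ℝ) + 1)) (fun n m hnm => ?_)
      tendsto_one_div_add_atTop_nhds_zero_nat
    obtain ⟨j, rfl⟩ := Nat.exists_eq_add_of_le hnm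
    rw [add_right_comm n j 1, concatWords_add ω (n + 1) j, branch_append, Real.dist_eq]
    set t := branch (concatWords (shift (n + 1) ω) j) 0
    have ht : t ∈ Icc (0 : ℝ) 1 := branch_mem_Icc _ ⟨le_rfl, zero_le_one⟩
    have hQ := le_continuant_concatWords h (n + 1)
    push_cast at hQ
    calc |branch (concatWords ω (n + 1)) 0 - branch (concatWords ω (n + 1)) t|
        ≤ |0 - t| / continuant (concatWords ω (n + 1)) ^ 2 :=
          abs_branch_sub_branch_le _ le_rfl ht.1
      _ ≤ 1 / ((n : ℝ) + 1) := by
          rw [zero_sub, abs_neg, abs_of_nonneg ht.1]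
          gcongr
          · exact ht.2
          · nlinarith
  obtain ⟨x, hx⟩ := cauchySeq_tendsto_of_complete cauchy
  have hx' := (tendsto_add_atTop_iff_nat (f := fun n => branch (concatWords ω n) 0) 1).1 hx
  rwa [limitPoint, hx'.limsup_eq]

lemma limitPoint_mem_Icc (h : ∀ i, ω i ≠ []) : limitPoint ω ∈ Icc (0 : ℝ) 1 :=
  isClosed_Icc.mem_of_tendsto (tendsto_limitPoint h)
    (Eventually.of_forall fun _ => branch_mem_Icc _ ⟨le_rfl, zero_le_one⟩)

lemma limitPoint_eq_branch (h : ∀ i, ω i ≠ []) (k : ℕ) :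
    limitPoint ω = branch (concatWords ω k) (limitPoint (shift k ω)) := by
  have hk := shift_ne_nil h k
  refine tendsto_nhds_unique ((tendsto_add_atTop_iff_nat k).2 (tendsto_limitPoint h)) ?_
  have tail := tendsto_limitPoint hk
  rw [tendsto_iff_dist_tendsto_zero] at tail ⊢
  refine squeeze_zero (fun _ => dist_nonneg) (fun n => ?_) tail
  rw [add_comm n k, concatWords_add ω k n, branch_append, Real.dist_eq, Real.dist_eq]
  exact (abs_branch_sub_branch_le _ (branch_nonneg _ le_rfl) (limitPoint_mem_Icc hk).1).trans
    (div_le_self (abs_nonneg _) (one_le_pow₀ (one_le_continuant _)))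

lemma limitPoint_eq_branch_zero (h : ∀ i, ω i ≠ []) :
    limitPoint ω = branch (ω 0) (limitPoint (shift 1 ω)) := by
  simpa [concatWords] using limitPoint_eq_branch h 1

lemma limitPoint_pos (h : ∀ i, ω i ≠ []) : 0 < limitPoint ω := by
  have ht := (limitPoint_mem_Icc (shift_ne_nil h 1)).1
  rw [limitPoint_eq_branch_zero h]
  obtain ⟨a, w, hw⟩ := List.exists_cons_of_ne_nil (h 0)
  rw [hw, branch]
  have := one_le_digit a
  have := branch_nonneg w ht
  positivity

lemma limitPoint_mem_Ioo (h : ∀ i, ω i ≠ []) : limitPoint ω ∈ Ioo (0 : ℝ) 1 := by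
  refine ⟨limitPoint_pos h, ?_⟩
  have h1 := shift_ne_nil h 1
  have ht : limitPoint (shift 1 ω) ∈ Ioc (0 : ℝ) 1 := ⟨limitPoint_pos h1, (limitPoint_mem_Icc h1).2⟩
  rw [limitPoint_eq_branch_zero h]
  obtain ⟨a, w, hw⟩ := List.exists_cons_of_ne_nil (h 0)
  have hpos : 0 < branch w (limitPoint (shift 1 ω)) := by
    cases w with
    | nil => exact ht.1
    | cons b w =>
      have := one_le_digit b
      have := branch_nonneg w ht.1.le
      rw [branch]
      positivity
  rw [hw, branch, div_lt_one] <;> linarith [one_le_digit a]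

lemma pq_limitPoint (h : ∀ i, ω i ≠ []) {a : ℕ+} (ha : ω k = [a]) :
    pq (limitPoint ω) ((concatWords ω k).length + 1) = a := by
  rw [limitPoint_eq_branch h (k + 1), concatWords, ha]
  exact pq_branch _ a [] (limitPoint_mem_Ioo (shift_ne_nil h (k + 1)))

lemma abs_branch_sub_branch_le_abs_limitPoint_sub (h : ∀ i, ω i ≠ []) (h' : ∀ i, ω' i ≠ [])
    (hω : ∀ i < k, ω' i = ω i) :
    |branch (ω k) (limitPoint (shift (k + 1) ω)) - branch (ω' k) (limitPoint (shift (k + 1) ω'))| /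
      (4 * continuant (concatWords ω k) ^ 2) ≤ |limitPoint ω - limitPoint ω'| := by
  rw [limitPoint_eq_branch h (k + 1), limitPoint_eq_branch h' (k + 1), concatWords, concatWords,
    branch_append, branch_append, concatWords_congr hω]
  exact le_abs_branch_sub_branch _ (branch_mem_Icc _ (limitPoint_mem_Icc (shift_ne_nil h (k + 1))))
    (branch_mem_Icc _ (limitPoint_mem_Icc (shift_ne_nil h' (k + 1))))

end LimitPoint

/-! ### Cantor sets of continued fractions -/

/-- One level of a Cantor construction: a finite set of words, weighted by a probability vector.
The number `growth` bounds the weight of a word relative to the size `continuant w ^ (-2 * s)` of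
its cylinder, and `holder` is the constant in the `s`-Hölder bound for the weight of a set of words,
valid as soon as the tails of the expansions are `(1 - D⁻¹)`-close to each other. -/
structure CantorLevel (s D : ℝ) where
  words : Finset (List ℕ+)
  weight : List ℕ+ → ℝ
  growth : ℝ
  holder : ℝ
  ne_nil : ∀ w ∈ words, w ≠ []
  weight_nonneg : ∀ w, 0 ≤ weight w
  sum_weight : ∑ w ∈ words, weight w = 1
  weight_mul_le : ∀ w ∈ words, weight w * continuant w ^ (2 * s) ≤ growth
  one_le_holder : 1 ≤ holder
  spread : ∀ w ∈ words, ∀ w' ∈ words, ∀ t ∈ Icc (0 : ℝ) 1, ∀ t' ∈ Icc (0 : ℝ) 1,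
    |branch w t - branch w' t'| ≤ 1 - D⁻¹
  separated : ∀ E ⊆ words, E.Nontrivial → ∃ w ∈ E, ∃ w' ∈ E,
    ∀ t ∈ Icc (0 : ℝ) 1, ∀ t' ∈ Icc (0 : ℝ) 1, |t - t'| ≤ 1 - D⁻¹ →
      ∑ v ∈ E, weight v ≤ holder * |branch w t - branch w' t'| ^ s

namespace CantorLevel

variable {s D : ℝ}

/-- The sequences which choose one word from each level. -/
def choices (c : ℕ → CantorLevel s D) : Set (ℕ → List ℕ+) :=
  Set.pi univ fun k => ((c k).words : Set (List ℕ+))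

/-- The probability distribution on words defined by the weights of a level. -/
noncomputable def pmf (l : CantorLevel s D) : PMF (List ℕ+) :=
  PMF.ofFinset ((l.words : Set (List ℕ+)).indicator fun w => ENNReal.ofReal (l.weight w)) l.words
    (by
      rw [Finset.sum_congr rfl fun w hw => indicator_of_mem (Finset.mem_coe.2 hw) _,
        ← ENNReal.ofReal_sum_of_nonneg fun w _ => l.weight_nonneg w, l.sum_weight,
        ENNReal.ofReal_one])
    fun w hw => indicator_of_notMem (Finset.mem_coe.not.2 hw) _

lemma toMeasure_pmf_apply (l : CantorLevel s D) {E : Finset (List ℕ+)} (hE : E ⊆ l.words) :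
    l.pmf.toMeasure E = ENNReal.ofReal (∑ w ∈ E, l.weight w) := by
  rw [PMF.toMeasure_apply_finset, ENNReal.ofReal_sum_of_nonneg fun w _ => l.weight_nonneg w]
  exact Finset.sum_congr rfl fun w hw => by
    rw [pmf, PMF.ofFinset_apply, indicator_of_mem (Finset.mem_coe.2 (hE hw))]

lemma toMeasure_pmf_compl (l : CantorLevel s D) : l.pmf.toMeasure (l.words : Set _)ᶜ = 0 := by
  rw [prob_compl_eq_zero_iff (.of_discrete), l.toMeasure_pmf_apply subset_rfl, l.sum_weight,
    ENNReal.ofReal_one]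

variable {c : ℕ → CantorLevel s D} {ω ω₁ ω₂ : ℕ → List ℕ+} {C : ℝ}

lemma ne_nil_of_mem (hω : ω ∈ choices c) (k : ℕ) : ω k ≠ [] :=
  (c k).ne_nil _ (hω k (mem_univ k))

lemma abs_limitPoint_shift_sub_le (h₁ : ω₁ ∈ choices c) (h₂ : ω₂ ∈ choices c) (k : ℕ) :
    |limitPoint (shift k ω₁) - limitPoint (shift k ω₂)| ≤ 1 - D⁻¹ := by
  have ne₁ := shift_ne_nil (ne_nil_of_mem h₁) k
  have ne₂ := shift_ne_nil (ne_nil_of_mem h₂) k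
  rw [limitPoint_eq_branch_zero ne₁, limitPoint_eq_branch_zero ne₂]
  exact (c k).spread _ (h₁ k (mem_univ k)) _ (h₂ k (mem_univ k))
    _ (limitPoint_mem_Icc (shift_ne_nil ne₁ 1)) _ (limitPoint_mem_Icc (shift_ne_nil ne₂ 1))

lemma prod_weight_nonneg (c : ℕ → CantorLevel s D) (ω : ℕ → List ℕ+) (k : ℕ) :
    0 ≤ ∏ i ∈ Finset.range k, (c i).weight (ω i) :=
  Finset.prod_nonneg fun i _ => (c i).weight_nonneg _

lemma prod_weight_mul_le (hs : 0 ≤ s) (hω : ω ∈ choices c) (k : ℕ) :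
    (∏ i ∈ Finset.range k, (c i).weight (ω i)) * continuant (concatWords ω k) ^ (2 * s) ≤
      ∏ i ∈ Finset.range k, 4 ^ s * (c i).growth := by
  induction k with
  | zero => simp [concatWords]
  | succ k ih =>
    have := continuant_pos (concatWords ω k)
    have := continuant_pos (ω k)
    have := prod_weight_nonneg c ω k
    have := (c k).weight_nonneg (ω k)
    have four : (2 : ℝ) ^ (2 * s) = 4 ^ s := by rw [Real.rpow_mul zero_le_two]; norm_num
    rw [Finset.prod_range_succ, Finset.prod_range_succ, concatWords]
    set P := ∏ i ∈ Finset.range k, (c i).weight (ω i)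
    calc P * (c k).weight (ω k) * continuant (concatWords ω k ++ ω k) ^ (2 * s)
        ≤ P * (c k).weight (ω k) *
            (2 * (continuant (concatWords ω k) * continuant (ω k))) ^ (2 * s) := by
          gcongr
          · exact (continuant_pos _).le
          · exact continuant_append_le _ _
      _ = (P * continuant (concatWords ω k) ^ (2 * s)) *
            (4 ^ s * ((c k).weight (ω k) * continuant (ω k) ^ (2 * s))) := by
          rw [Real.mul_rpow (by positivity) (by positivity),
            Real.mul_rpow (by positivity) (by positivity), four]
          ring
      _ ≤ _ := by
          gcongr
          · exact (by positivity : (0 : ℝ) ≤ _).trans ih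
          · exact (c k).weight_mul_le _ (hω k (mem_univ k))

lemma prod_weight_mul_sum_le (hs : 0 ≤ s)
    (hC : ∀ k, (∏ i ∈ Finset.range k, 4 ^ s * (c i).growth) * (c k).holder ≤ C)
    (h : ω ∈ choices c) (h₁ : ω₁ ∈ choices c) (h₂ : ω₂ ∈ choices c) {k : ℕ}
    (hω₁ : ∀ i < k, ω₁ i = ω i) (hω₂ : ∀ i < k, ω₂ i = ω i) {m : ℝ}
    (hm : ∀ t ∈ Icc (0 : ℝ) 1, ∀ t' ∈ Icc (0 : ℝ) 1, |t - t'| ≤ 1 - D⁻¹ →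
      m ≤ (c k).holder * |branch (ω₁ k) t - branch (ω₂ k) t'| ^ s) :
    (∏ i ∈ Finset.range k, (c i).weight (ω i)) * m ≤
      4 ^ s * C * |limitPoint ω₁ - limitPoint ω₂| ^ s := by
  have ne₁ := ne_nil_of_mem h₁
  have ne₂ := ne_nil_of_mem h₂
  have holder_nonneg := zero_le_one.trans (c k).one_le_holder
  have hQ := continuant_pos (concatWords ω k)
  have weight_nonneg := prod_weight_nonneg c ω k
  have tails := hm _ (limitPoint_mem_Icc (shift_ne_nil ne₁ (k + 1))) _
    (limitPoint_mem_Icc (shift_ne_nil ne₂ (k + 1))) (abs_limitPoint_shift_sub_le h₁ h₂ (k + 1))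
  have sep := abs_branch_sub_branch_le_abs_limitPoint_sub ne₁ ne₂ (k := k)
    fun i hi => (hω₂ i hi).trans (hω₁ i hi).symm
  rw [concatWords_congr hω₁, div_le_iff₀ (by positivity)] at sep
  set P := ∏ i ∈ Finset.range k, (c i).weight (ω i)
  set d := |limitPoint ω₁ - limitPoint ω₂|
  calc P * m ≤ P * ((c k).holder * (d * (4 * continuant (concatWords ω k) ^ 2)) ^ s) := by
        gcongr
        exact tails.trans (by gcongr)
    _ = 4 ^ s * ((P * continuant (concatWords ω k) ^ (2 * s)) * (c k).holder) * d ^ s := by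
        rw [Real.mul_rpow (abs_nonneg _) (by positivity),
          Real.mul_rpow (by positivity) (by positivity), Real.rpow_mul hQ.le, Real.rpow_two]
        ring
    _ ≤ 4 ^ s * C * d ^ s := by
        gcongr
        exact (mul_le_mul_of_nonneg_right (prod_weight_mul_le hs h k) holder_nonneg).trans (hC k)

lemma tendsto_prod_weight (hs : 0 < s)
    (hC : ∀ k, (∏ i ∈ Finset.range k, 4 ^ s * (c i).growth) * (c k).holder ≤ C)
    (h : ω ∈ choices c) :
    Tendsto (fun k => ∏ i ∈ Finset.range k, (c i).weight (ω i)) atTop (nhds 0) := by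
  have decay : Tendsto (fun k : ℕ => C * (k : ℝ) ^ (-(2 * s))) atTop (nhds 0) := by
    simpa using ((tendsto_rpow_neg_atTop (by positivity : 0 < 2 * s)).comp
      tendsto_natCast_atTop_atTop).const_mul C
  refine squeeze_zero' (Eventually.of_forall (prod_weight_nonneg c ω)) ?_ decay
  filter_upwards [eventually_ge_atTop 1] with k hk
  have hk : (0 : ℝ) < k := Nat.cast_pos.2 hk
  have weight_nonneg := prod_weight_nonneg c ω k
  rw [Real.rpow_neg hk.le, ← div_eq_mul_inv, le_div_iff₀ (by positivity)]
  calc (∏ i ∈ Finset.range k, (c i).weight (ω i)) * (k : ℝ) ^ (2 * s)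
      ≤ (∏ i ∈ Finset.range k, (c i).weight (ω i)) * continuant (concatWords ω k) ^ (2 * s) := by
        gcongr
        exact le_continuant_concatWords (ne_nil_of_mem h) k
    _ ≤ ((∏ i ∈ Finset.range k, (c i).weight (ω i)) * continuant (concatWords ω k) ^ (2 * s)) *
          (c k).holder :=
        le_mul_of_one_le_right
          (mul_nonneg weight_nonneg (Real.rpow_nonneg (continuant_pos _).le _)) (c k).one_le_holder
    _ ≤ C :=
        (mul_le_mul_of_nonneg_right (prod_weight_mul_le hs.le h k)
          (zero_le_one.trans (c k).one_le_holder)).trans (hC k)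

theorem le_dimH_image_limitPoint (hs : 0 < s)
    (hC : ∀ k, (∏ i ∈ Finset.range k, 4 ^ s * (c i).growth) * (c k).holder ≤ C) :
    ENNReal.ofReal s ≤ dimH (limitPoint '' choices c) := by
  have prod_singleton {ω : ℕ → List ℕ+} (h : ω ∈ choices c) (k : ℕ) :
      ∏ i ∈ Finset.range k, (c i).pmf.toMeasure {ω i} =
        ENNReal.ofReal (∏ i ∈ Finset.range k, (c i).weight (ω i)) := by
    rw [ENNReal.ofReal_prod_of_nonneg fun i _ => (c i).weight_nonneg _]
    refine Finset.prod_congr rfl fun i _ => ?_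
    rw [← Finset.coe_singleton, toMeasure_pmf_apply _ (by simpa using h i (mem_univ i)),
      Finset.sum_singleton]
  refine le_dimH_image_pi_univ (ν := fun k => (c k).pmf.toMeasure) (C := (4 ^ s * C).toNNReal)
    hs.le ENNReal.coe_ne_top (fun k => (c k).toMeasure_pmf_compl) measurable_limitPoint
    (fun ω h k E hE hnt => ?_) fun ω h => ?_
  · lift E to Finset (List ℕ+) using (c k).words.finite_toSet.subset hE
    rw [Finset.coe_subset] at hE
    obtain ⟨w, hw, w', hw', hsep⟩ := (c k).separated E hE hnt
    refine ⟨w, hw, w', hw', ?_⟩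
    rintro ω₁ ⟨hω₁, h₁⟩ ω₂ ⟨hω₂, h₂⟩ rfl rfl
    rw [prod_singleton h, toMeasure_pmf_apply _ hE,
      ← ENNReal.ofReal_mul (prod_weight_nonneg c ω k), edist_dist, Real.dist_eq,
      ENNReal.ofReal_rpow_of_nonneg (abs_nonneg _) hs.le, ← ENNReal.ofReal,
      ← ENNReal.ofReal_mul' (by positivity)]
    exact ENNReal.ofReal_le_ofReal
      (prod_weight_mul_sum_le hs.le hC h h₁ h₂ hω₁ hω₂ hsep)
  · simp_rw [prod_singleton h]
    simpa using ENNReal.tendsto_ofReal (tendsto_prod_weight hs hC h)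

end CantorLevel

section Gaps

variable {D t t' : ℝ} {w w' : List ℕ+} {a a' : ℕ+}

lemma abs_sub_div_sq_le_abs_one_div_sub {x y R : ℝ} (hx : 0 < x) (hy : 0 < y) (hxR : x ≤ R)
    (hyR : y ≤ R) : |x - y| / R ^ 2 ≤ |1 / x - 1 / y| := by
  have := hx.le.trans hxR
  rw [div_sub_div _ _ hx.ne' hy.ne', one_mul, mul_one, abs_div, abs_of_pos (mul_pos hx hy),
    abs_sub_comm, sq]
  gcongr

lemma one_le_abs_digit_sub (h : a ≠ a') : (1 : ℝ) ≤ |((a : ℕ) : ℝ) - (a' : ℕ)| := by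
  have : (1 : ℤ) ≤ |((a : ℕ) : ℤ) - (a' : ℕ)| :=
    Int.one_le_abs (sub_ne_zero.2 fun e => h (PNat.eq (Nat.cast_injective e)))
  exact_mod_cast this

lemma mul_abs_digit_sub_le {δ y y' : ℝ} (h : a ≠ a') (hδ : δ ≤ 1) (hy : |y - y'| ≤ 1 - δ) :
    δ * |((a : ℕ) : ℝ) - (a' : ℕ)| ≤ |((a : ℕ) + y) - ((a' : ℕ) + y')| := by
  have one_le := one_le_abs_digit_sub h
  have triangle : |((a : ℕ) : ℝ) - (a' : ℕ)| - |y' - y| ≤ |((a : ℕ) - (a' : ℕ)) - (y' - y)| :=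
    abs_sub_abs_le_abs_sub _ _
  rw [abs_sub_comm y' y] at triangle
  rw [show ((a : ℕ) + y) - ((a' : ℕ) + y') = ((a : ℕ) - (a' : ℕ)) - (y' - y) by ring]
  nlinarith

lemma inv_le_branch (hw : w ≠ []) (hD : ∀ a ∈ w, ((a : ℕ) : ℝ) + 1 ≤ D) (ht : t ∈ Icc (0 : ℝ) 1) :
    D⁻¹ ≤ branch w t := by
  obtain ⟨a, w, rfl⟩ := List.exists_cons_of_ne_nil hw
  have hbranch := branch_mem_Icc w ht
  have := one_le_digit a
  rw [branch, ← one_div]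
  exact one_div_le_one_div_of_le (by linarith [hbranch.1])
    (by linarith [hbranch.2, hD a List.mem_cons_self])

lemma abs_sub_le_of_mem_Icc_inv {x y : ℝ} (hx : x ∈ Icc D⁻¹ 1) (hy : y ∈ Icc D⁻¹ 1) :
    |x - y| ≤ 1 - D⁻¹ :=
  abs_sub_le_iff.2 ⟨by linarith [hx.2, hy.1], by linarith [hy.2, hx.1]⟩

lemma inv_pow_le_abs_branch_sub (hD : 1 ≤ D) (hlen : w.length = w'.length) (hne : w ≠ w')
    (hw : ∀ a ∈ w, ((a : ℕ) : ℝ) + 1 ≤ D) (hw' : ∀ a ∈ w', ((a : ℕ) : ℝ) + 1 ≤ D)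
    (ht : t ∈ Icc (0 : ℝ) 1) (ht' : t' ∈ Icc (0 : ℝ) 1) (htt' : |t - t'| ≤ 1 - D⁻¹) :
    (D ^ (2 * w.length + 1))⁻¹ ≤ |branch w t - branch w' t'| := by
  induction w generalizing w' with
  | nil => exact absurd (List.length_eq_zero_iff.1 hlen.symm).symm hne
  | cons a v ih =>
    obtain ⟨a', v', rfl⟩ := List.exists_cons_of_length_eq_add_one hlen.symm
    rw [List.forall_mem_cons] at hw hw'
    have hlen' : v.length = v'.length := by simpa using hlen
    have hb := branch_mem_Icc v ht
    have hb' := branch_mem_Icc v' ht'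
    have := one_le_digit a
    have := one_le_digit a'
    have gap : (D ^ (2 * v.length + 1))⁻¹ ≤
        |((a : ℕ) + branch v t) - ((a' : ℕ) + branch v' t')| := by
      by_cases haa' : a = a'
      · subst haa'
        rw [add_sub_add_left_eq_sub]
        exact ih hlen' (fun h => hne (h ▸ rfl)) hw.2 hw'.2
      · have tails : |branch v t - branch v' t'| ≤ 1 - D⁻¹ := by
          obtain rfl | hv := eq_or_ne v []
          · rwa [List.length_eq_zero_iff.1 hlen'.symm]
          · have hv' : v' ≠ [] := fun h => hv (List.length_eq_zero_iff.1 (by simp [hlen', h]))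
            exact abs_sub_le_of_mem_Icc_inv ⟨inv_le_branch hv hw.2 ht, hb.2⟩
              ⟨inv_le_branch hv' hw'.2 ht', hb'.2⟩
        calc (D ^ (2 * v.length + 1))⁻¹ ≤ D⁻¹ :=
              inv_anti₀ (by positivity) (le_self_pow₀ hD (by lia))
          _ ≤ D⁻¹ * |((a : ℕ) : ℝ) - (a' : ℕ)| :=
              le_mul_of_one_le_right (by positivity) (one_le_abs_digit_sub haa')
          _ ≤ _ := mul_abs_digit_sub_le haa' (inv_le_one_of_one_le₀ hD) tails
    calc (D ^ (2 * (a :: v).length + 1))⁻¹ = (D ^ (2 * v.length + 1))⁻¹ / D ^ 2 := by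
          rw [List.length_cons, div_eq_mul_inv, ← mul_inv, ← pow_add]
          congr 2
      _ ≤ |((a : ℕ) + branch v t) - ((a' : ℕ) + branch v' t')| / D ^ 2 := by gcongr
      _ ≤ |branch (a :: v) t - branch (a' :: v') t'| :=
          abs_sub_div_sq_le_abs_one_div_sub (by linarith [hb.1]) (by linarith [hb'.1])
            (by linarith [hb.2]) (by linarith [hb'.2])

end Gaps

namespace CantorLevel

variable {s D : ℝ} {L : ℕ} {W : Finset (List ℕ+)}

/-- The level of a set of words of a common length, weighted proportionally to
`continuant w ^ (-2 * s)`. -/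
noncomputable def block (hs : 0 ≤ s) (hD : 1 ≤ D) (hL : L ≠ 0) (hW : W.Nonempty)
    (hlen : ∀ w ∈ W, w.length = L) (hdigit : ∀ w ∈ W, ∀ a ∈ w, ((a : ℕ) : ℝ) + 1 ≤ D) :
    CantorLevel s D where
  words := W
  weight w := continuant w ^ (-(2 * s)) / ∑ v ∈ W, continuant v ^ (-(2 * s))
  growth := (∑ w ∈ W, continuant w ^ (-(2 * s)))⁻¹
  holder := (D ^ (2 * L + 1)) ^ s
  ne_nil w hw := List.ne_nil_of_length_pos (by rw [hlen w hw]; lia)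
  weight_nonneg w := div_nonneg (Real.rpow_nonneg (continuant_pos w).le _)
    (Finset.sum_nonneg fun v _ => Real.rpow_nonneg (continuant_pos v).le _)
  sum_weight := by
    rw [← Finset.sum_div]
    exact div_self (Finset.sum_pos (fun w _ => Real.rpow_pos_of_pos (continuant_pos w) _) hW).ne'
  weight_mul_le w _ := by
    rw [div_mul_eq_mul_div, ← Real.rpow_add (continuant_pos w), neg_add_cancel, Real.rpow_zero,
      one_div]
  one_le_holder := Real.one_le_rpow (one_le_pow₀ hD) hs
  spread w hw w' hw' t ht t' ht' := by
    have ne_nil {w} (hw : w ∈ W) : w ≠ [] := List.ne_nil_of_length_pos (by rw [hlen w hw]; lia)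
    exact abs_sub_le_of_mem_Icc_inv
      ⟨inv_le_branch (ne_nil hw) (hdigit w hw) ht, (branch_mem_Icc w ht).2⟩
      ⟨inv_le_branch (ne_nil hw') (hdigit w' hw') ht', (branch_mem_Icc w' ht').2⟩
  separated E hE hnt := by
    obtain ⟨w, hw, w', hw', hne⟩ := hnt
    refine ⟨w, hw, w', hw', fun t ht t' ht' htt' => ?_⟩
    have gap := inv_pow_le_abs_branch_sub hD ((hlen w (hE hw)).trans (hlen w' (hE hw')).symm) hne
      (hdigit w (hE hw)) (hdigit w' (hE hw')) ht ht' htt'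
    rw [hlen w (hE hw), inv_le_iff_one_le_mul₀' (by positivity)] at gap
    have sum_nonneg (E : Finset (List ℕ+)) : 0 ≤ ∑ v ∈ E, continuant v ^ (-(2 * s)) :=
      Finset.sum_nonneg fun v _ => Real.rpow_nonneg (continuant_pos v).le _
    rw [← Finset.sum_div, ← Real.mul_rpow (by positivity) (abs_nonneg _)]
    refine (div_le_one_of_le₀ ?_ (sum_nonneg W)).trans (Real.one_le_rpow gap hs)
    exact Finset.sum_le_sum_of_subset_of_nonneg hE
      fun v _ _ => Real.rpow_nonneg (continuant_pos v).le _

end CantorLevel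

section DigitRange

variable {ρ D s t t' : ℝ} {a a' : ℕ+}

lemma half_le_card_digitRange (hρ : 2 ≤ ρ) : ρ / 2 ≤ ((digitRange ρ).card : ℝ) := by
  have ceil_lt := Nat.ceil_lt_add_one (a := ρ) (by linarith)
  have le_ceil := Nat.le_ceil (2 * ρ)
  have card : (⌈2 * ρ⌉₊ : ℝ) ≤ ((digitRange ρ).card : ℝ) + ⌈ρ⌉₊ := by
    rw [card_digitRange (by linarith)]
    exact_mod_cast le_tsub_add
  linarith

lemma inv_card_digitRange_mul_rpow_le (hρ : 2 ≤ ρ) (hs : 0 ≤ s) (ha : a ∈ digitRange ρ) :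
    ((digitRange ρ).card : ℝ)⁻¹ * ((a : ℕ) : ℝ) ^ (2 * s) ≤ 2 * 4 ^ s * ρ ^ (2 * s - 1) := by
  rw [mem_digitRange (by linarith)] at ha
  have := half_le_card_digitRange hρ
  calc ((digitRange ρ).card : ℝ)⁻¹ * ((a : ℕ) : ℝ) ^ (2 * s) ≤ (ρ / 2)⁻¹ * (2 * ρ) ^ (2 * s) := by
        gcongr
        exact ha.2.le
    _ = 2 * 4 ^ s * ρ ^ (2 * s - 1) := by
        rw [Real.mul_rpow zero_le_two (by positivity), Real.rpow_mul zero_le_two,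
          Real.rpow_sub_one (by positivity)]
        norm_num
        ring

lemma continuant_singleton (a : ℕ+) : continuant [a] = (a : ℕ) := by simp [continuant, cfMatrix]

lemma branch_singleton_mem_Icc (ha : (2 : ℝ) ≤ (a : ℕ)) (ht : 0 ≤ t) :
    branch [a] t ∈ Icc (0 : ℝ) 2⁻¹ := by
  refine ⟨branch_nonneg _ ht, ?_⟩
  rw [branch, branch, one_div]
  exact inv_anti₀ two_pos (by linarith)

lemma abs_digit_sub_le_abs_branch_sub (hρ : 1 ≤ ρ) (hD : 1 ≤ D) (ha : ((a : ℕ) : ℝ) < 2 * ρ)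
    (ha' : ((a' : ℕ) : ℝ) < 2 * ρ) (hne : a ≠ a') (ht : t ∈ Icc (0 : ℝ) 1)
    (ht' : t' ∈ Icc (0 : ℝ) 1) (htt' : |t - t'| ≤ 1 - D⁻¹) :
    |((a : ℕ) : ℝ) - (a' : ℕ)| / ρ ≤ 9 * D * ρ * |branch [a] t - branch [a'] t'| := by
  have := one_le_digit a
  have := one_le_digit a'
  have gap := mul_abs_digit_sub_le hne (inv_le_one_of_one_le₀ hD) htt'
  have inv_gap := abs_sub_div_sq_le_abs_one_div_sub (R := 3 * ρ)
    (by linarith [ht.1] : 0 < ((a : ℕ) : ℝ) + t) (by linarith [ht'.1] : 0 < ((a' : ℕ) : ℝ) + t')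
    (by linarith [ht.2]) (by linarith [ht'.2])
  calc |((a : ℕ) : ℝ) - (a' : ℕ)| / ρ
      = 9 * D * ρ * (D⁻¹ * |((a : ℕ) : ℝ) - (a' : ℕ)| / (3 * ρ) ^ 2) := by field_simp; norm_num
    _ ≤ 9 * D * ρ * |branch [a] t - branch [a'] t'| := by
        simp only [branch]
        gcongr
        exact le_trans (by gcongr) inv_gap

lemma card_div_card_digitRange_le (hρ : 2 ≤ ρ) (hs1 : s ≤ 1) {I : Finset ℕ+}
    (hI : I ⊆ digitRange ρ) (hnt : I.Nontrivial) :
    (I.card : ℝ) / (digitRange ρ).card ≤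
      4 * (|((I.min' hnt.nonempty : ℕ) : ℝ) - (I.max' hnt.nonempty : ℕ)| / ρ) ^ s := by
  set a := I.min' hnt.nonempty
  set b := I.max' hnt.nonempty
  have hab : a < b := Finset.min'_lt_max'_of_card _ (Finset.one_lt_card_iff_nontrivial.2 hnt)
  have habs : |((a : ℕ) : ℝ) - (b : ℕ)| = (b : ℕ) - (a : ℕ) := by
    rw [abs_sub_comm, abs_of_pos (sub_pos.2 (by exact_mod_cast hab))]
  have one_le : (1 : ℝ) ≤ (b : ℕ) - (a : ℕ) := habs ▸ one_le_abs_digit_sub hab.ne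
  have ha := (mem_digitRange (by linarith)).1 (hI (I.min'_mem hnt.nonempty))
  have hb := (mem_digitRange (by linarith)).1 (hI (I.max'_mem hnt.nonempty))
  have card_le : (I.card : ℝ) ≤ (b : ℕ) - (a : ℕ) + 1 := by
    have : I.card ≤ (b : ℕ) + 1 - (a : ℕ) := by
      rw [← PNat.card_Icc]
      exact Finset.card_le_card fun i hi => Finset.mem_Icc.2 ⟨I.min'_le i hi, I.le_max' i hi⟩
    have cast : (I.card : ℝ) + (a : ℕ) ≤ (b : ℕ) + 1 := by
      have : (a : ℕ) < b := hab
      exact_mod_cast (by lia : I.card + (a : ℕ) ≤ (b : ℕ) + 1)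
    linarith
  rw [habs]
  calc (I.card : ℝ) / (digitRange ρ).card ≤ (2 * ((b : ℕ) - (a : ℕ))) / (ρ / 2) := by
        gcongr
        · linarith
        · exact half_le_card_digitRange hρ
    _ = 4 * (((b : ℕ) - (a : ℕ)) / ρ) := by field_simp; norm_num
    _ ≤ 4 * (((b : ℕ) - (a : ℕ)) / ρ) ^ s := by
        gcongr
        exact Real.self_le_rpow_of_le_one (by positivity)
          (div_le_one_of_le₀ (by linarith [ha.1, hb.2]) (by linarith)) hs1

/-- The level of the one-digit words with digit in `[ρ, 2 * ρ)`, equally weighted. -/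
noncomputable def CantorLevel.digit (hs : 0 ≤ s) (hs1 : s ≤ 1) (hD : 2 ≤ D) (hρ : 2 ≤ ρ) :
    CantorLevel s D where
  words := (digitRange ρ).map ⟨fun a => [a], List.singleton_injective⟩
  weight _ := ((digitRange ρ).card : ℝ)⁻¹
  growth := 2 * 4 ^ s * ρ ^ (2 * s - 1)
  holder := 4 * (9 * D * ρ) ^ s
  ne_nil := by simp
  weight_nonneg _ := by positivity
  sum_weight := by
    have := half_le_card_digitRange hρ
    rw [Finset.sum_const, Finset.card_map, nsmul_eq_mul]
    exact mul_inv_cancel₀ (by linarith)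
  weight_mul_le := by
    simp only [Finset.mem_map, Function.Embedding.coeFn_mk, forall_exists_index, and_imp]
    rintro _ a ha rfl
    rw [continuant_singleton]
    exact inv_card_digitRange_mul_rpow_le hρ hs ha
  one_le_holder := one_le_mul_of_one_le_of_one_le (by norm_num)
    (Real.one_le_rpow (by nlinarith) hs)
  spread := by
    simp only [Finset.mem_map, Function.Embedding.coeFn_mk, forall_exists_index, and_imp]
    rintro _ a ha rfl _ a' ha' rfl t ht t' ht'
    rw [mem_digitRange (by linarith)] at ha ha'
    have hb := branch_singleton_mem_Icc (hρ.trans ha.1) ht.1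
    have hb' := branch_singleton_mem_Icc (hρ.trans ha'.1) ht'.1
    have : D⁻¹ ≤ 2⁻¹ := inv_anti₀ two_pos hD
    exact abs_sub_le_iff.2 ⟨by linarith [hb.2, hb'.1], by linarith [hb.1, hb'.2]⟩
  separated E hE hnt := by
    obtain ⟨I, hI, rfl⟩ := Finset.subset_map_iff.1 hE
    rw [Finset.map_nontrivial] at hnt
    have mem_min := I.min'_mem hnt.nonempty
    have mem_max := I.max'_mem hnt.nonempty
    refine ⟨_, Finset.mem_map_of_mem _ mem_min, _, Finset.mem_map_of_mem _ mem_max,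
      fun t ht t' ht' htt' => ?_⟩
    have gap := abs_digit_sub_le_abs_branch_sub (ρ := ρ) (by linarith) (by linarith)
      ((mem_digitRange (by linarith)).1 (hI mem_min)).2
      ((mem_digitRange (by linarith)).1 (hI mem_max)).2
      (Finset.min'_lt_max'_of_card I (Finset.one_lt_card_iff_nontrivial.2 hnt)).ne ht ht' htt'
    rw [Finset.sum_const, Finset.card_map, nsmul_eq_mul, ← div_eq_mul_inv, mul_assoc,
      ← Real.mul_rpow (by positivity) (abs_nonneg _)]
    exact (card_div_card_digitRange_le hρ hs1 hI hnt).trans (by gcongr; exact gap)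

end DigitRange

/-! ### The lower bound -/

namespace CantorLevel

variable {s D : ℝ}

lemma growth_nonneg (b : CantorLevel s D) : 0 ≤ b.growth := by
  obtain ⟨w, hw⟩ : b.words.Nonempty := by
    by_contra! h
    simpa [h] using b.sum_weight
  have := continuant_pos w
  have := b.weight_nonneg w
  exact (by positivity : 0 ≤ b.weight w * continuant w ^ (2 * s)).trans (b.weight_mul_le w hw)

end CantorLevel

section Blocks

variable {s θ : ℝ}

lemma exists_mul_pow_lt_sum_continuant (C : ℝ) (hθ : 0 < θ)
    (h : (Real.log θ : EReal) < pressure s) :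
    ∃ L ≠ 0, ∃ W : Finset (List ℕ+), (∀ w ∈ W, w.length = L) ∧
      C * θ ^ L < ∑ w ∈ W, continuant w ^ (-(2 * s)) := by
  obtain ⟨ℓ, hθℓ, hℓ⟩ := EReal.lt_iff_exists_real_btwn.1 h
  rw [EReal.coe_lt_coe_iff] at hθℓ
  have large : ∀ᶠ n : ℕ in atTop, C < Real.exp ((ℓ - Real.log θ) * n) :=
    (Real.tendsto_exp_atTop.comp (tendsto_natCast_atTop_atTop.const_mul_atTop
      (sub_pos.2 hθℓ))).eventually_gt_atTop C
  obtain ⟨L, hexp, hlarge, hL⟩ :=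
    ((frequently_exp_le hℓ).and_eventually (large.and (eventually_ne_atTop 0))).exists
  have lt : ENNReal.ofReal (C * θ ^ L) < partitionSum s L := by
    refine lt_of_lt_of_le ?_ hexp
    rw [← EReal.coe_natCast, ← EReal.coe_mul, EReal.exp_coe,
      ENNReal.ofReal_lt_ofReal_iff (Real.exp_pos _)]
    calc C * θ ^ L < Real.exp ((ℓ - Real.log θ) * L) * θ ^ L := by gcongr
      _ = Real.exp (ℓ * L) := by
        rw [← Real.rpow_natCast, Real.rpow_def_of_pos hθ, ← Real.exp_add]
        ring_nf
  rw [partitionSum, ENNReal.tsum_eq_iSup_sum, lt_iSup_iff] at lt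
  obtain ⟨t, ht⟩ := lt
  rw [← ENNReal.ofReal_sum_of_nonneg
    fun a _ => Real.rpow_nonneg (continuant_pos (List.ofFn a)).le _] at ht
  refine ⟨L, hL, t.map ⟨List.ofFn, List.ofFn_injective⟩, by simp, ?_⟩
  rw [Finset.sum_map]
  exact ENNReal.ofReal_lt_ofReal_iff'.1 ht |>.1

lemma exists_digit_add_one_le (W : Finset (List ℕ+)) :
    ∃ D : ℝ, 2 ≤ D ∧ ∀ w ∈ W, ∀ a ∈ w, ((a : ℕ) : ℝ) + 1 ≤ D := by
  obtain ⟨M, hM⟩ := (W.finite_toSet.biUnion fun w _ => w.finite_toSet).bddAbove (α := ℕ+)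
  refine ⟨(M : ℕ) + 1, by linarith [one_le_digit M], fun w hw a ha => ?_⟩
  have : (a : ℕ) ≤ (M : ℕ) := hM (mem_biUnion hw ha)
  gcongr

lemma exists_cantorLevel_growth_mul_le {C : ℝ} (hC : 0 ≤ C) (hs : 0 ≤ s) (hθ : 0 < θ)
    (h : (Real.log θ : EReal) < pressure s) :
    ∃ L ≠ 0, ∃ D, 2 ≤ D ∧ ∃ b : CantorLevel s D, (∀ w ∈ b.words, w.length = L) ∧
      b.growth * (C * θ ^ L) ≤ 1 := by
  obtain ⟨L, hL, W, hlen, hW⟩ := exists_mul_pow_lt_sum_continuant C hθ h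
  obtain ⟨D, hD, hdigit⟩ := exists_digit_add_one_le W
  have sum_pos : 0 < ∑ w ∈ W, continuant w ^ (-(2 * s)) :=
    (by positivity : 0 ≤ C * θ ^ L).trans_lt hW
  refine ⟨L, hL, D, hD, .block hs (by linarith) hL (Finset.nonempty_of_sum_ne_zero sum_pos.ne')
    hlen hdigit, hlen, ?_⟩
  rw [CantorLevel.block, inv_mul_le_one₀ sum_pos]
  exact hW.le

end Blocks

/-- The state of the construction after finitely many levels: the number of digits chosen so far,
the product of the growth factors of the levels used so far, and whether the last digit chosen
is the first one of a pair of large digits. -/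
structure Stage where
  position : ℕ
  mass : ℝ
  pending : Prop

/-- The data for a construction that mostly uses the level `block`, but inserts pairs of
consecutive digits of sizes `first n` and `second n` at the positions `n` and `n + 1` for
which this is cheap. -/
structure Schedule (s D : ℝ) where
  nonneg : 0 ≤ s
  le_one : s ≤ 1
  two_le : 2 ≤ D
  block : CantorLevel s D
  blockLength : ℕ
  length_eq : ∀ w ∈ block.words, w.length = blockLength
  growth_le : 4 ^ s * block.growth ≤ 1
  first : ℕ → ℝ
  second : ℕ → ℝ

namespace Schedule

variable {s D : ℝ} (p : Schedule s D) (σ : Stage)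

open Classical in
/-- The size of the next digit, if it is to be a large one. -/
noncomputable def radius : ℝ :=
  if σ.pending then p.second σ.position else p.first (σ.position + 1)

/-- The next digit is to be a large one. A digit of size `ρ` multiplies the mass by at most
`32 * ρ ^ (2 * s - 1)`, so the last condition makes sure that the second digit of a pair can follow
the first one. -/
def IsLarge : Prop :=
  2 ≤ p.radius σ ∧ 32 * (σ.mass * p.radius σ ^ s) ≤ 1 ∧
    (¬ σ.pending → 2 ≤ p.second (σ.position + 1) ∧
      32 * (32 * (σ.mass * p.first (σ.position + 1) ^ (2 * s - 1)) *
        p.second (σ.position + 1) ^ s) ≤ 1)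

open Classical in
/-- The level used at a given stage. -/
noncomputable def level : CantorLevel s D :=
  if h : p.IsLarge σ then .digit p.nonneg p.le_one p.two_le h.1 else p.block

open Classical in
/-- The stage following a given one. -/
noncomputable def next : Stage where
  position := σ.position + if p.IsLarge σ then 1 else p.blockLength
  mass := σ.mass * (4 ^ s * (p.level σ).growth)
  pending := p.IsLarge σ ∧ ¬ σ.pending

/-- The stage reached after `k` levels. -/
noncomputable def stage (k : ℕ) : Stage := p.next^[k] ⟨0, 1, False⟩

/-- The invariant of the construction: the mass stays at most `1`, and a pair of large digits that
has been begun can be completed. -/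
def IsAdmissible : Prop :=
  0 ≤ σ.mass ∧ σ.mass ≤ 1 ∧ (σ.pending → p.IsLarge σ)

variable {p σ}

lemma stage_succ (k : ℕ) : p.stage (k + 1) = p.next (p.stage k) :=
  Function.iterate_succ_apply' ..

lemma mass_stage (k : ℕ) :
    (p.stage k).mass = ∏ i ∈ Finset.range k, 4 ^ s * (p.level (p.stage i)).growth := by
  induction k with
  | zero => rfl
  | succ k ih => rw [stage_succ, Finset.prod_range_succ, ← ih, next]

lemma level_of_isLarge (h : p.IsLarge σ) :
    p.level σ = .digit p.nonneg p.le_one p.two_le h.1 := dif_pos h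

lemma level_of_not_isLarge (h : ¬ p.IsLarge σ) : p.level σ = p.block := dif_neg h

lemma four_rpow_le (p : Schedule s D) : (4 : ℝ) ^ s ≤ 4 :=
  Real.rpow_le_self_of_one_le (by norm_num) p.le_one

lemma mass_next_le (h : p.IsLarge σ) (hmass : 0 ≤ σ.mass) :
    (p.next σ).mass ≤ 32 * (σ.mass * p.radius σ ^ (2 * s - 1)) := by
  have : 0 ≤ p.radius σ := zero_le_two.trans h.1
  have four := p.four_rpow_le
  rw [next, level_of_isLarge h, CantorLevel.digit]
  calc σ.mass * (4 ^ s * (2 * 4 ^ s * p.radius σ ^ (2 * s - 1)))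
      = 2 * (4 ^ s * 4 ^ s) * (σ.mass * p.radius σ ^ (2 * s - 1)) := by ring
    _ ≤ 2 * (4 * 4) * (σ.mass * p.radius σ ^ (2 * s - 1)) := by gcongr
    _ = 32 * (σ.mass * p.radius σ ^ (2 * s - 1)) := by ring

lemma mass_next_le_one_of_isLarge (h : p.IsLarge σ) (hmass : 0 ≤ σ.mass) :
    (p.next σ).mass ≤ 1 :=
  calc (p.next σ).mass ≤ 32 * (σ.mass * p.radius σ ^ (2 * s - 1)) := mass_next_le h hmass
    _ ≤ 32 * (σ.mass * p.radius σ ^ s) := by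
      gcongr
      · linarith [h.1]
      · linarith [p.le_one]
    _ ≤ 1 := h.2.1

lemma isLarge_next (h : p.IsLarge σ) (hpending : ¬ σ.pending) (hmass : 0 ≤ σ.mass) :
    p.IsLarge (p.next σ) := by
  have pending : (p.next σ).pending := ⟨h, hpending⟩
  have position : (p.next σ).position = σ.position + 1 := by rw [next, if_pos h]
  have radius_next : p.radius (p.next σ) = p.second (σ.position + 1) := by
    rw [radius, if_pos pending, position]
  have le := mass_next_le h hmass
  obtain ⟨two_le, cheap⟩ := h.2.2 hpending
  rw [radius, if_neg hpending] at le
  rw [IsLarge, radius_next]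
  refine ⟨two_le, le_trans ?_ cheap, fun h => absurd pending h⟩
  gcongr

lemma IsAdmissible.next (h : p.IsAdmissible σ) : p.IsAdmissible (p.next σ) := by
  obtain ⟨nonneg, le_one, -⟩ := h
  refine ⟨mul_nonneg nonneg (mul_nonneg (by positivity) (p.level σ).growth_nonneg), ?_,
    fun hpending => isLarge_next hpending.1 hpending.2 nonneg⟩
  by_cases hlarge : p.IsLarge σ
  · exact mass_next_le_one_of_isLarge hlarge nonneg
  · rw [Schedule.next, level_of_not_isLarge hlarge]
    exact mul_le_one₀ le_one (mul_nonneg (by positivity) p.block.growth_nonneg) p.growth_le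

lemma isAdmissible_stage (k : ℕ) : p.IsAdmissible (p.stage k) := by
  induction k with
  | zero => exact ⟨zero_le_one, le_rfl, False.elim⟩
  | succ k ih => exact stage_succ (p := p) k ▸ ih.next

lemma mass_mul_holder_le (h : p.IsAdmissible σ) :
    σ.mass * (p.level σ).holder ≤ p.block.holder + 4 * (9 * D) ^ s := by
  have hD := p.two_le
  have holder_nonneg := zero_le_one.trans p.block.one_le_holder
  obtain ⟨nonneg, le_one, -⟩ := h
  by_cases hlarge : p.IsLarge σ
  · have : 0 ≤ p.radius σ := zero_le_two.trans hlarge.1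
    have cheap : σ.mass * p.radius σ ^ s ≤ 1 := by
      have : 0 ≤ σ.mass * p.radius σ ^ s := by positivity
      linarith [hlarge.2.1]
    rw [level_of_isLarge hlarge, CantorLevel.digit]
    calc σ.mass * (4 * (9 * D * p.radius σ) ^ s)
        = 4 * (9 * D) ^ s * (σ.mass * p.radius σ ^ s) := by
          rw [Real.mul_rpow (by positivity) (by positivity)]
          ring
      _ ≤ 4 * (9 * D) ^ s := mul_le_of_le_one_right (by positivity) cheap
      _ ≤ p.block.holder + 4 * (9 * D) ^ s := le_add_of_nonneg_left holder_nonneg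
  · rw [level_of_not_isLarge hlarge]
    exact (mul_le_of_le_one_left holder_nonneg le_one).trans
      (le_add_of_nonneg_right (by positivity))

theorem le_dimH_image_limitPoint (p : Schedule s D) (hs : 0 < s) :
    ENNReal.ofReal s ≤
      dimH (limitPoint '' CantorLevel.choices fun k => p.level (p.stage k)) :=
  CantorLevel.le_dimH_image_limitPoint hs fun k =>
    mass_stage (p := p) k ▸ mass_mul_holder_le (isAdmissible_stage k)

lemma exists_eq_singleton (h : p.IsLarge σ) {w : List ℕ+} (hw : w ∈ (p.level σ).words) :
    ∃ a : ℕ+, w = [a] ∧ p.radius σ ≤ (a : ℕ) ∧ ((a : ℕ) : ℝ) < 2 * p.radius σ := by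
  rw [level_of_isLarge h, CantorLevel.digit] at hw
  obtain ⟨a, ha, rfl⟩ := Finset.mem_map.1 hw
  exact ⟨a, rfl, (mem_digitRange (zero_lt_two.trans_le h.1)).1 ha⟩

variable {ω : ℕ → List ℕ+}

lemma length_concatWords (hω : ω ∈ CantorLevel.choices fun k => p.level (p.stage k)) (k : ℕ) :
    (concatWords ω k).length = (p.stage k).position := by
  induction k with
  | zero => rfl
  | succ k ih =>
    have hωk := hω k (mem_univ k)
    rw [concatWords, List.length_append, ih, stage_succ, next]
    congr 1
    split_ifs with h
    · obtain ⟨a, ha, -⟩ := exists_eq_singleton h hωk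
      rw [ha, List.length_singleton]
    · exact p.length_eq _ (level_of_not_isLarge h ▸ hωk)

lemma radius_le_pq_limitPoint (hω : ω ∈ CantorLevel.choices fun k => p.level (p.stage k)) {k : ℕ}
    (h : p.IsLarge (p.stage k)) :
    p.radius (p.stage k) ≤ pq (limitPoint ω) ((p.stage k).position + 1) ∧
      (pq (limitPoint ω) ((p.stage k).position + 1) : ℝ) < 2 * p.radius (p.stage k) := by
  obtain ⟨a, ha, hrange⟩ := exists_eq_singleton h (hω k (mem_univ k))
  rwa [← length_concatWords hω, pq_limitPoint (CantorLevel.ne_nil_of_mem hω) ha]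

lemma limitPoint_mem_consecutiveLargeDigits
    (hω : ω ∈ CantorLevel.choices fun k => p.level (p.stage k))
    (hfreq : ∃ᶠ k in atTop, p.IsLarge (p.stage k) ∧ ¬ (p.stage k).pending)
    (hirr : Irrational (limitPoint ω)) :
    limitPoint ω ∈ consecutiveLargeDigits p.first p.second := by
  have ne_nil := CantorLevel.ne_nil_of_mem hω
  refine ⟨limitPoint_mem_Ioo ne_nil, hirr, infinite_of_forall_exists_gt fun N => ?_⟩
  obtain ⟨k, hk, hlarge, hpending⟩ := frequently_atTop.1 hfreq N
  have position_next : (p.stage (k + 1)).position = (p.stage k).position + 1 := by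
    rw [stage_succ, next, if_pos hlarge]
  have pending_next : (p.stage (k + 1)).pending := stage_succ (p := p) k ▸ ⟨hlarge, hpending⟩
  have first := radius_le_pq_limitPoint hω hlarge
  have second := radius_le_pq_limitPoint hω ((isAdmissible_stage (k + 1)).2.2 pending_next)
  rw [radius, if_neg hpending] at first
  rw [radius, if_pos pending_next, position_next] at second
  refine ⟨(p.stage k).position + 1, ⟨first, second⟩, ?_⟩
  have := le_length_concatWords ne_nil k
  rw [length_concatWords hω] at this
  lia

theorem le_dimH_consecutiveLargeDigits (p : Schedule s D) (hs : 0 < s)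
    (hfreq : ∃ᶠ k in atTop, p.IsLarge (p.stage k) ∧ ¬ (p.stage k).pending) :
    ENNReal.ofReal s ≤ dimH (consecutiveLargeDigits p.first p.second) := by
  have subset : limitPoint '' CantorLevel.choices (fun k => p.level (p.stage k)) ⊆
      consecutiveLargeDigits p.first p.second ∪ range ((↑) : ℚ → ℝ) := by
    rintro _ ⟨ω, hω, rfl⟩
    by_cases hirr : Irrational (limitPoint ω)
    · exact .inl (limitPoint_mem_consecutiveLargeDigits hω hfreq hirr)
    · exact .inr (not_not.1 hirr)
  have := (p.le_dimH_image_limitPoint hs).trans (dimH_mono subset)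
  rwa [dimH_union, dimH_countable (countable_range _), max_eq_left zero_le] at this

section Frequently

variable {θ C : ℝ} {N : ℕ}

lemma mass_mul_pow_position_le (hθ : 0 ≤ θ)
    (hgrowth : 4 ^ s * p.block.growth * θ ^ p.blockLength ≤ 1 / 2)
    (hN : ∀ k ≥ N, ¬ p.IsLarge (p.stage k)) (j : ℕ) :
    (p.stage (N + j)).mass * θ ^ (p.stage (N + j)).position ≤
      (1 / 2) ^ j * θ ^ (p.stage N).position := by
  induction j with
  | zero =>
    rw [pow_zero, add_zero]
    exact mul_le_mul_of_nonneg_right (isAdmissible_stage N).2.1 (pow_nonneg hθ _)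
  | succ j ih =>
    have hblock := hN (N + j) (by lia)
    have factor_nonneg : 0 ≤ 4 ^ s * p.block.growth * θ ^ p.blockLength := by
      have := p.block.growth_nonneg
      positivity
    rw [← add_assoc, stage_succ, next, level_of_not_isLarge hblock, if_neg hblock, pow_add]
    calc _ = (p.stage (N + j)).mass * θ ^ (p.stage (N + j)).position *
          (4 ^ s * p.block.growth * θ ^ p.blockLength) := by ring
      _ ≤ (1 / 2) ^ j * θ ^ (p.stage N).position * (1 / 2) := by gcongr
      _ = _ := by ring

lemma tendsto_mass_mul_pow_position (hθ : 0 ≤ θ)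
    (hgrowth : 4 ^ s * p.block.growth * θ ^ p.blockLength ≤ 1 / 2)
    (hN : ∀ᶠ k in atTop, ¬ p.IsLarge (p.stage k)) (C : ℝ) :
    Tendsto (fun k => C * ((p.stage k).mass * θ ^ ((p.stage k).position + 1))) atTop (nhds 0) := by
  obtain ⟨N, hN⟩ := eventually_atTop.1 hN
  have pow_tendsto : Tendsto (fun j : ℕ => (1 / 2 : ℝ) ^ j * θ ^ (p.stage N).position) atTop
      (nhds 0) := by
    simpa using (tendsto_pow_atTop_nhds_zero_of_lt_one (by norm_num : (0 : ℝ) ≤ 1 / 2)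
      (by norm_num)).mul_const (θ ^ (p.stage N).position)
  have shifted := squeeze_zero
    (fun j => mul_nonneg (isAdmissible_stage (N + j)).1 (pow_nonneg hθ _))
    (mass_mul_pow_position_le hθ hgrowth hN) pow_tendsto
  simp only [add_comm N] at shifted
  have := ((tendsto_add_atTop_iff_nat
    (f := fun k => (p.stage k).mass * θ ^ (p.stage k).position) N).1 shifted).const_mul (C * θ)
  rw [mul_zero] at this
  exact this.congr fun k => by ring

lemma le_position (p : Schedule s D) (hL : p.blockLength ≠ 0) (k : ℕ) :
    k ≤ (p.stage k).position := by
  induction k with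
  | zero => exact zero_le
  | succ k ih =>
    rw [stage_succ, next]
    split_ifs <;> lia

lemma eventually_isLarge (hL : p.blockLength ≠ 0)
    (htwo : ∀ᶠ n in atTop, 2 ≤ p.first n ∧ 2 ≤ p.second n)
    (hfirst : ∀ n, p.first n ^ s ≤ C * θ ^ n)
    (hsecond : ∀ n, p.first n ^ (2 * s - 1) * p.second n ^ s ≤ C * θ ^ n)
    (hmass : Tendsto (fun k => 32 * 32 * C * ((p.stage k).mass * θ ^ ((p.stage k).position + 1)))
      atTop (nhds 0)) :
    ∀ᶠ k in atTop, ¬ (p.stage k).pending → p.IsLarge (p.stage k) := by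
  have position_tendsto : Tendsto (fun k => (p.stage k).position + 1) atTop atTop :=
    tendsto_atTop_mono (fun k => (p.le_position hL k).trans (Nat.le_succ _)) tendsto_id
  filter_upwards [position_tendsto.eventually htwo, hmass.eventually_le_const one_pos]
    with k htwo hsmall hpending
  set n := (p.stage k).position + 1
  have mass_nonneg := (isAdmissible_stage (p := p) k).1
  have first_nonneg : 0 ≤ p.first n := zero_le_two.trans htwo.1
  have first_le : (p.stage k).mass * p.first n ^ s ≤ C * ((p.stage k).mass * θ ^ n) :=
    (mul_le_mul_of_nonneg_left (hfirst n) mass_nonneg).trans_eq (mul_left_comm _ _ _)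
  have second_le : (p.stage k).mass * (p.first n ^ (2 * s - 1) * p.second n ^ s) ≤
      C * ((p.stage k).mass * θ ^ n) :=
    (mul_le_mul_of_nonneg_left (hsecond n) mass_nonneg).trans_eq (mul_left_comm _ _ _)
  have := mul_nonneg mass_nonneg (Real.rpow_nonneg first_nonneg s)
  rw [IsLarge, radius, if_neg hpending]
  exact ⟨htwo.1, by linarith, fun _ => ⟨htwo.2, by linarith⟩⟩

lemma frequently_isLarge (hL : p.blockLength ≠ 0) (hθ : 0 ≤ θ)
    (hgrowth : 4 ^ s * p.block.growth * θ ^ p.blockLength ≤ 1 / 2)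
    (htwo : ∀ᶠ n in atTop, 2 ≤ p.first n ∧ 2 ≤ p.second n)
    (hfirst : ∀ n, p.first n ^ s ≤ C * θ ^ n)
    (hsecond : ∀ n, p.first n ^ (2 * s - 1) * p.second n ^ s ≤ C * θ ^ n) :
    ∃ᶠ k in atTop, p.IsLarge (p.stage k) ∧ ¬ (p.stage k).pending := by
  by_contra! hnot
  obtain ⟨N, hN⟩ := eventually_atTop.1 hnot
  have not_pending (k : ℕ) (hk : N + 1 ≤ k) : ¬ (p.stage k).pending := by
    obtain ⟨j, rfl⟩ := Nat.exists_eq_add_of_le' hk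
    rw [← add_assoc, stage_succ]
    exact fun h => h.2 (hN (j + N) (Nat.le_add_left N j) h.1)
  have not_isLarge (k : ℕ) (hk : N + 1 ≤ k) : ¬ p.IsLarge (p.stage k) := fun h =>
    not_pending k hk (hN k (by lia) h)
  obtain ⟨k, hlarge, hk⟩ := ((eventually_isLarge hL htwo hfirst hsecond
    (tendsto_mass_mul_pow_position hθ hgrowth (eventually_atTop.2 ⟨N + 1, not_isLarge⟩) _)).and
    (eventually_ge_atTop (N + 1))).exists
  exact not_isLarge k hk (hlarge (not_pending k hk))

end Frequently

end Schedule

section LowerBound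

variable {s θ C : ℝ} {R₁ R₂ : ℕ → ℝ}

theorem le_dimH_of_rpow_le_pow (hs : 0 < s) (hs1 : s ≤ 1) (hθ : 1 ≤ θ)
    (hR : ∀ᶠ n in atTop, 2 ≤ R₁ n ∧ 2 ≤ R₂ n) (hR₁ : ∀ n, R₁ n ^ s ≤ C * θ ^ n)
    (hR₂ : ∀ n, R₁ n ^ (2 * s - 1) * R₂ n ^ s ≤ C * θ ^ n)
    (hpressure : (Real.log θ : EReal) < pressure s) :
    ENNReal.ofReal s ≤ dimH (consecutiveLargeDigits R₁ R₂) := by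
  obtain ⟨L, hL, D, hD, b, hlen, hgrowth⟩ := exists_cantorLevel_growth_mul_le
    (C := 2 * 4 ^ s) (by positivity) hs.le (zero_lt_one.trans_le hθ) hpressure
  have growth_nonneg : 0 ≤ 4 ^ s * b.growth := mul_nonneg (by positivity) b.growth_nonneg
  have decay : 4 ^ s * b.growth * θ ^ L ≤ 1 / 2 := by linarith
  have growth_le : 4 ^ s * b.growth ≤ 4 ^ s * b.growth * θ ^ L :=
    le_mul_of_one_le_right growth_nonneg (one_le_pow₀ hθ)
  let p : Schedule s D := ⟨hs.le, hs1, hD, b, L, hlen, by linarith, R₁, R₂⟩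
  exact p.le_dimH_consecutiveLargeDigits hs
    (Schedule.frequently_isLarge hL (zero_le_one.trans hθ) decay hR hR₁ hR₂)

end LowerBound

section Geometric

variable {s A A₁ A₂ c c₁ c₂ : ℝ}

lemma mul_pow_rpow (hc : 0 ≤ c) (hA : 0 ≤ A) (n : ℕ) (r : ℝ) :
    (c * A ^ n) ^ r = c ^ r * (A ^ r) ^ n := by
  rw [Real.mul_rpow hc (by positivity), Real.rpow_pow_comm hA]

lemma mul_pow_rpow_mul_mul_pow_rpow (hc₁ : 0 ≤ c₁) (hc₂ : 0 ≤ c₂) (hA₁ : 0 ≤ A₁) (hA₂ : 0 ≤ A₂)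
    (n : ℕ) (r s : ℝ) :
    (c₁ * A₁ ^ n) ^ r * (c₂ * A₂ ^ n) ^ s = c₁ ^ r * c₂ ^ s * (A₁ ^ r * A₂ ^ s) ^ n := by
  rw [mul_pow_rpow hc₁ hA₁, mul_pow_rpow hc₂ hA₂, mul_pow, mul_mul_mul_comm]

lemma log_rpow_mul_rpow (hA₁ : 0 < A₁) (hA₂ : 0 < A₂) (s : ℝ) :
    Real.log (A₁ ^ (2 * s - 1) * A₂ ^ s) =
      (Real.log (A₁ * A₂) + Real.log A₁) * s - Real.log A₁ := by
  rw [Real.log_mul (by positivity) (by positivity), Real.log_rpow hA₁, Real.log_rpow hA₂,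
    Real.log_mul hA₁.ne' hA₂.ne']
  ring

lemma pressure_lt_log_of_sExp_lt (hA : 1 < A) (h : sExp A < s) :
    pressure s < (Real.log (A ^ s) : EReal) := by
  have hA₀ := zero_lt_one.trans hA
  rw [sExp_eq_pressureRoot hA₀] at h
  have := pressure_lt_of_pressureRoot_lt (Real.log_pos hA) (Real.log_pos hA).le h
  rwa [sub_zero, mul_comm, ← Real.log_rpow hA₀] at this

lemma log_lt_pressure_of_lt_sExp (hA : 0 < A) (hs : 0 ≤ s) (h : s < sExp A) :
    (Real.log (A ^ s) : EReal) < pressure s := by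
  rw [sExp_eq_pressureRoot hA] at h
  have := lt_pressure_of_lt_pressureRoot hs h
  rwa [sub_zero, mul_comm, ← Real.log_rpow hA] at this

lemma pressure_lt_log_of_gExp_lt (hA₁ : 1 < A₁) (hA₂ : 1 < A₂) (h : gExp (A₁ * A₂) A₁ < s) :
    pressure s < (Real.log (A₁ ^ (2 * s - 1) * A₂ ^ s) : EReal) := by
  have hA₁₀ := zero_lt_one.trans hA₁
  have hA₂₀ := zero_lt_one.trans hA₂
  have log_pos := Real.log_pos (one_lt_mul_of_lt_of_le hA₁ hA₂.le)
  have log_pos₁ := Real.log_pos hA₁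
  rw [gExp_eq_pressureRoot (by positivity) hA₁₀] at h
  rw [log_rpow_mul_rpow hA₁₀ hA₂₀]
  exact pressure_lt_of_pressureRoot_lt (by positivity) (by linarith) h

lemma log_lt_pressure_of_lt_gExp (hA₁ : 0 < A₁) (hA₂ : 0 < A₂) (hs : 0 ≤ s)
    (h : s < gExp (A₁ * A₂) A₁) :
    (Real.log (A₁ ^ (2 * s - 1) * A₂ ^ s) : EReal) < pressure s := by
  rw [gExp_eq_pressureRoot (by positivity) hA₁] at h
  rw [log_rpow_mul_rpow hA₁ hA₂]
  exact lt_pressure_of_lt_pressureRoot hs h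

lemma le_one_of_lt_sExp (hA : 1 < A) (h : s < sExp A) : s ≤ 1 := by
  by_contra! hs
  have lt := log_lt_pressure_of_lt_sExp (zero_lt_one.trans hA) (zero_le_one.trans hs.le) h
  have log_neg := lt.trans_le ((pressure_antitone hs.le).trans pressure_one_nonpos)
  exact (Real.log_nonneg (Real.one_le_rpow hA.le (zero_le_one.trans hs.le))).not_gt
    (EReal.coe_neg'.1 log_neg)

lemma dimH_consecutiveLargeDigits_le_of_lt (hA₁ : 1 < A₁) (hA₂ : 1 < A₂) (hc₁ : 0 < c₁)
    (hc₂ : 0 < c₂) (h : min (sExp A₁) (gExp (A₁ * A₂) A₁) < s) :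
    dimH (consecutiveLargeDigits (fun n => c₁ * A₁ ^ n) (fun n => c₂ * A₂ ^ n)) ≤
      ENNReal.ofReal s := by
  have hA₁₀ := zero_lt_one.trans hA₁
  have hA₂₀ := zero_lt_one.trans hA₂
  obtain h | h := min_lt_iff.1 h
  · have hs : 0 < s := by
      rw [sExp_eq_pressureRoot hA₁₀] at h
      exact (pressureRoot_nonneg _ _).trans_lt h
    refine dimH_le_of_pow_le_rpow (θ := A₁ ^ s) (C := (c₁ ^ s)⁻¹) hs (by positivity)
      (fun n => by positivity) (fun n => ?_) (pressure_lt_log_of_sExp_lt hA₁ h)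
    rw [mul_pow_rpow hc₁.le hA₁₀.le, inv_mul_cancel_left₀ (by positivity)]
  · have hs : 0 < s := by
      rw [gExp_eq_pressureRoot (by positivity) hA₁₀] at h
      exact (pressureRoot_nonneg _ _).trans_lt h
    refine dimH_le_of_pow_le_rpow_mul_rpow (θ := A₁ ^ (2 * s - 1) * A₂ ^ s)
      (C := (c₁ ^ (2 * s - 1) * c₂ ^ s)⁻¹) hs (by positivity) (fun n => by positivity)
      (fun n => by positivity) (fun n => ?_) (pressure_lt_log_of_gExp_lt hA₁ hA₂ h)
    rw [mul_pow_rpow_mul_mul_pow_rpow hc₁.le hc₂.le hA₁₀.le hA₂₀.le,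
      inv_mul_cancel_left₀ (by positivity)]

lemma le_dimH_consecutiveLargeDigits_of_lt (hA₁ : 1 < A₁) (hA₂ : 1 < A₂) (hc₁ : 0 < c₁)
    (hc₂ : 0 < c₂) (hs : 0 < s) (h : s < min (sExp A₁) (gExp (A₁ * A₂) A₁)) :
    ENNReal.ofReal s ≤
      dimH (consecutiveLargeDigits (fun n => c₁ * A₁ ^ n) (fun n => c₂ * A₂ ^ n)) := by
  have hA₁₀ := zero_lt_one.trans hA₁
  have hA₂₀ := zero_lt_one.trans hA₂
  obtain ⟨hsExp, hgExp⟩ := lt_min_iff.1 h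
  refine le_dimH_of_rpow_le_pow (θ := max (A₁ ^ s) (A₁ ^ (2 * s - 1) * A₂ ^ s))
    (C := max (c₁ ^ s) (c₁ ^ (2 * s - 1) * c₂ ^ s)) hs (le_one_of_lt_sExp hA₁ hsExp)
    (le_max_of_le_left (Real.one_le_rpow hA₁.le hs.le)) ?_ (fun n => ?_) (fun n => ?_) ?_
  · have tendsto {A c : ℝ} (hA : 1 < A) (hc : 0 < c) :
        Tendsto (fun n : ℕ => c * A ^ n) atTop atTop :=
      (tendsto_pow_atTop_atTop_of_one_lt hA).const_mul_atTop hc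
    exact ((tendsto hA₁ hc₁).eventually_ge_atTop 2).and ((tendsto hA₂ hc₂).eventually_ge_atTop 2)
  · rw [mul_pow_rpow hc₁.le hA₁₀.le]
    gcongr
    · exact le_max_left ..
    · exact le_max_left ..
  · rw [mul_pow_rpow_mul_mul_pow_rpow hc₁.le hc₂.le hA₁₀.le hA₂₀.le]
    gcongr
    · exact le_max_right ..
    · exact le_max_right ..
  · obtain hmax | hmax := max_choice (A₁ ^ s) (A₁ ^ (2 * s - 1) * A₂ ^ s) <;> rw [hmax]
    · exact log_lt_pressure_of_lt_sExp hA₁₀ hs.le hsExp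
    · exact log_lt_pressure_of_lt_gExp hA₁₀ hA₂₀ hs.le hgExp

end Geometric

lemma eq_ofReal_of_forall_lt {d : ℝ≥0∞} {r : ℝ} (hle : ∀ s, r < s → d ≤ ENNReal.ofReal s)
    (hge : ∀ s, 0 < s → s < r → ENNReal.ofReal s ≤ d) : d = ENNReal.ofReal r := by
  apply le_antisymm
  · refine ge_of_tendsto ((ENNReal.continuous_ofReal.tendsto r).mono_left
      (nhdsWithin_le_nhds (s := Ioi r))) ?_
    filter_upwards [self_mem_nhdsWithin] with s hs using hle s hs
  · refine le_of_forall_lt fun y hy => ?_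
    obtain ⟨s, hys, hs⟩ := ENNReal.lt_iff_exists_nnreal_btwn.1 hy
    have s_pos : 0 < (s : ℝ) :=
      NNReal.coe_pos.2 (ENNReal.coe_pos.1 (zero_le.trans_lt hys))
    rw [← ENNReal.ofReal_coe_nnreal] at hys hs
    exact hys.trans_le (hge s s_pos ((ENNReal.ofReal_lt_ofReal_iff_of_nonneg s_pos.le).1 hs))

end GaussCF

theorem hussain_li_shulga (A₁ A₂ c₁ c₂ : ℝ) (hA₁ : 1 < A₁) (hA₂ : 1 < A₂)
    (hc₁ : 0 < c₁) (hc₂ : 0 < c₂) :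
    dimH {x : ℝ | x ∈ Set.Ioo (0 : ℝ) 1 ∧ Irrational x ∧
      {n : ℕ | (c₁ * A₁ ^ n ≤ (pq x n : ℝ) ∧ (pq x n : ℝ) < 2 * (c₁ * A₁ ^ n)) ∧
        (c₂ * A₂ ^ n ≤ (pq x (n + 1) : ℝ) ∧
          (pq x (n + 1) : ℝ) < 2 * (c₂ * A₂ ^ n))}.Infinite} =
    ENNReal.ofReal (min (sExp A₁) (gExp (A₁ * A₂) A₁)) :=
  GaussCF.eq_ofReal_of_forall_lt
    (fun _ => GaussCF.dimH_consecutiveLargeDigits_le_of_lt hA₁ hA₂ hc₁ hc₂)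
    (fun _ => GaussCF.le_dimH_consecutiveLargeDigits_of_lt hA₁ hA₂ hc₁ hc₂)
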